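/- arXiv:2007.11054 — 6 statements merged into one kernel-verified Lean document; each statement's English description precedes it below -/
import Mathlib

section
/- For every m ∈ ℕ^n and every integer k ≥ 1, S_C(k·m) equals the k-fold Minkowski sum of S_C(m) with itself: every element of S_C(k·m) can be written as x_1 + ⋯ + x_k with all x_t ∈ S_C(m), and conversely every such sum lies in S_C(k·m). (This expresses the normality of the polytope P_w(λ), part (1) of the paper's Main Theorem, in type C.) -/
open Finset
open scoped Pointwise

/-- The lattice-point set `S_C(m)` of the polytope `P_w(λ)` in type `C_n`, where
`w = s_1 ⋯ s_{n-1} s_n s_{n-1} ⋯ s_1` and `λ = m_1 ω_1 + ⋯ + m_n ω_n`.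
A point is a 1-based tuple `c_1, …, c_{2n-1}` of nonnegative integers (all other
coordinates vanish), subject to the Dyck-path inequalities (C1)–(C2), the degree-path
inequalities (C3) and the inequalities (C4) from paths with coefficients. -/
def SC (n : ℕ) (m : ℕ → ℕ) : Set (ℕ → ℕ) :=
  {c | (∀ l, (l = 0 ∨ 2 * n - 1 < l) → c l = 0) ∧
    (∀ j, 1 ≤ j → j < n →
      ∑ l ∈ Icc 1 j, c l ≤ ∑ l ∈ Icc 1 j, m l) ∧
    ((∑ l ∈ Icc 1 (n - 1), c l) + c (2 * n - 1) ≤ ∑ l ∈ Icc 1 n, m l) ∧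
    (∀ j, 2 ≤ j → j ≤ n →
      (∑ l ∈ Icc 1 (2 * n - j), c l) + c (2 * n - 1) ≤
        (∑ l ∈ Icc 1 (j - 1), m l) + 2 * ∑ l ∈ Icc j n, m l) ∧
    (∀ j k, 2 ≤ j → j ≤ n → j - 1 ≤ k → k < n →
      2 * (∑ l ∈ Icc 1 k, c l) + (∑ l ∈ Icc (k + 1) (2 * n - j), c l) + 2 * c (2 * n - 1) ≤
        (∑ l ∈ Icc 1 (j - 1), m l) + 2 * (∑ l ∈ Icc j n, m l) + ∑ l ∈ Icc 1 k, m l)}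

/-- Partial sums. -/
def PS (c : ℕ → ℕ) (j : ℕ) : ℕ := ∑ l ∈ Icc 1 j, c l

lemma PS_zero (c : ℕ → ℕ) : PS c 0 = 0 := by simp [PS]

lemma PS_succ (c : ℕ → ℕ) (j : ℕ) : PS c (j + 1) = PS c j + c (j + 1) := by
  unfold PS
  rw [Finset.sum_Icc_succ_top (by omega)]

lemma PS_add (c c' : ℕ → ℕ) (j : ℕ) : PS (c + c') j = PS c j + PS c' j := by
  simp [PS, Finset.sum_add_distrib]

lemma PS_smul (k : ℕ) (c : ℕ → ℕ) (j : ℕ) : PS (k • c) j = k * PS c j := by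
  simp [PS, Finset.mul_sum]

lemma PS_split (c : ℕ → ℕ) (a b : ℕ) (h : a ≤ b) :
    PS c a + ∑ l ∈ Icc (a + 1) b, c l = PS c b := by
  induction b, h using Nat.le_induction with
  | base => simp
  | succ b hb ih =>
    rw [Finset.sum_Icc_succ_top (by omega), PS_succ, ← ih]; ring

lemma SC_iff (n : ℕ) (hn : 2 ≤ n) (m c : ℕ → ℕ) : c ∈ SC n m ↔
    (∀ l, (l = 0 ∨ 2 * n - 1 < l) → c l = 0) ∧
    (∀ j, j < n → PS c j ≤ PS m j) ∧
    (PS c (n - 1) + c (2 * n - 1) ≤ PS m n) ∧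
    (∀ s, s + 1 < n → PS c (n + s) + c (2 * n - 1) + PS m (n - 1 - s) ≤ 2 * PS m n) ∧
    (∀ s k, s + 1 < n → n - 1 - s ≤ k → k < n →
      PS c k + PS c (n + s) + 2 * c (2 * n - 1) + PS m (n - 1 - s) ≤
        2 * PS m n + PS m k) := by
  constructor
  · rintro ⟨h0, h1, h2, h3, h4⟩
    refine ⟨h0, ?_, h2, ?_, ?_⟩
    · intro j hj
      rcases Nat.eq_zero_or_pos j with rfl | h
      · simp [PS]
      · exact h1 j h hj
    · intro s hs
      have h := h3 (n - s) (by omega) (by omega)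
      have e := PS_split m (n - 1 - s) n (by omega)
      rw [show 2 * n - (n - s) = n + s by omega, show n - s - 1 = n - 1 - s by omega,
        show n - s = n - 1 - s + 1 by omega] at h
      change PS c (n + s) + _ ≤ PS m _ + _ at h
      omega
    · intro s k hs hk hk'
      have h := h4 (n - s) k (by omega) (by omega) (by omega) hk'
      have e := PS_split m (n - 1 - s) n (by omega)
      have e' := PS_split c k (n + s) (by omega)
      rw [show 2 * n - (n - s) = n + s by omega, show n - s - 1 = n - 1 - s by omega,
        show n - s = n - 1 - s + 1 by omega] at h
      change 2 * PS c k + _ + _ ≤ PS m _ + _ + PS m _ at h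
      omega
  · rintro ⟨h0, h1, h2, h3, h4⟩
    refine ⟨h0, fun j _ hj => h1 j hj, h2, ?_, ?_⟩
    · intro j hj hjn
      have h := h3 (n - j) (by omega)
      have e := PS_split m (j - 1) n (by omega)
      rw [show n + (n - j) = 2 * n - j by omega, show n - 1 - (n - j) = j - 1 by omega] at h
      rw [show j - 1 + 1 = j by omega] at e
      change PS c (2 * n - j) + _ ≤ PS m _ + _
      omega
    · intro j k hj hjn hk hk'
      have h := h4 (n - j) k (by omega) (by omega) hk'
      have e := PS_split m (j - 1) n (by omega)
      have e' := PS_split c k (2 * n - j) (by omega)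
      rw [show n + (n - j) = 2 * n - j by omega, show n - 1 - (n - j) = j - 1 by omega] at h
      rw [show j - 1 + 1 = j by omega] at e
      change 2 * PS c k + _ + _ ≤ PS m _ + _ + PS m _
      omega

lemma SC_zero (n : ℕ) (hn : 2 ≤ n) : (0 : ℕ → ℕ) ∈ SC n 0 := by
  rw [SC_iff n hn]
  simp [PS]

lemma SC_add (n : ℕ) (hn : 2 ≤ n) (m m' c c' : ℕ → ℕ) (h : c ∈ SC n m) (h' : c' ∈ SC n m') :
    c + c' ∈ SC n (m + m') := by
  rw [SC_iff n hn] at *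
  obtain ⟨h0, h1, h2, h3, h4⟩ := h
  obtain ⟨g0, g1, g2, g3, g4⟩ := h'
  simp only [PS_add, Pi.add_apply]
  refine ⟨?_, ?_, ?_, ?_, ?_⟩
  · intro l hl
    have := h0 l hl
    have := g0 l hl
    omega
  · intro j hj
    have := h1 j hj
    have := g1 j hj
    omega
  · omega
  · intro s hs
    have := h3 s hs
    have := g3 s hs
    omega
  · intro s k hs hk hk'
    have := h4 s k hs hk hk'
    have := g4 s k hs hk hk'
    omega

lemma SC_sum (n : ℕ) (hn : 2 ≤ n) (m : ℕ → ℕ) {ι : Type*} (s : Finset ι) (x : ι → ℕ → ℕ)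
    (h : ∀ t, x t ∈ SC n m) : ∑ t ∈ s, x t ∈ SC n (s.card • m) := by
  classical
  induction s using Finset.induction_on with
  | empty => simpa using SC_zero n hn
  | insert a s ha ih =>
    rw [Finset.sum_insert ha, Finset.card_insert_of_notMem ha, add_smul, one_smul,
      add_comm (x a)]
    exact SC_add n hn _ _ _ _ ih (h a)

/-- Hermite's identity. -/
lemma hermite (k : ℕ) (hk : 1 ≤ k) (v : ℕ) : ∑ t ∈ range k, (v + t) / k = v := by
  induction v with
  | zero =>
    apply Finset.sum_eq_zero
    intro t ht
    rw [Finset.mem_range] at ht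
    rw [zero_add]
    exact Nat.div_eq_of_lt ht
  | succ v ih =>
    have h1 := Finset.sum_range_succ (fun t => (v + t) / k) k
    have h2 := Finset.sum_range_succ' (fun t => (v + t) / k) k
    rw [h1] at h2
    simp only [Nat.add_div_right v (show 0 < k by omega)] at h2
    have : ∑ t ∈ range k, (v + 1 + t) / k = ∑ t ∈ range k, (v + (t + 1)) / k :=
      Finset.sum_congr rfl fun t _ => by rw [show v + 1 + t = v + (t + 1) by ring]
    simp only [add_zero] at h2
    omega

lemma fill {ι : Type*} (s : Finset ι) (a : ι → ℕ) (y : ℕ) (h : y ≤ ∑ t ∈ s, a t) :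
    ∃ b : ι → ℕ, (∀ t, b t ≤ a t) ∧ ∑ t ∈ s, b t = y := by
  classical
  induction s using Finset.induction_on generalizing y with
  | empty => exact ⟨0, fun t => Nat.zero_le _, by simp at h; simp [h]⟩
  | insert i s hi ih =>
    rw [Finset.sum_insert hi] at h
    obtain ⟨b, hb, hs⟩ := ih (y - min y (a i)) (by omega)
    refine ⟨fun t => if t = i then min y (a i) else b t, ?_, ?_⟩
    · intro t
      by_cases ht : t = i
      · subst ht; simp
      · simp [ht, hb t]
    · rw [Finset.sum_insert hi, Finset.sum_congr rfl (g := b), hs]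
      · simp
      · intro t ht
        have : t ≠ i := fun e => hi (e ▸ ht)
        simp [this]

lemma ladder {ι : Type*} [Fintype ι] (S : ℕ) (a : ℕ → ι → ℕ) (y : ℕ → ℕ)
    (hmono : ∀ s t, s + 1 < S → a s t ≤ a (s + 1) t)
    (hy : ∀ s, s < S → ∑ l ∈ range (s + 1), y l ≤ ∑ t, a s t) :
    ∃ b : ℕ → ι → ℕ, (∀ s, s < S → ∑ t, b s t = y s) ∧
      ∀ s t, s < S → ∑ l ∈ range (s + 1), b l t ≤ a s t := by
  induction S with
  | zero => exact ⟨fun _ _ => 0, by simp, by simp⟩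
  | succ S ih =>
    obtain ⟨b, hb, hb'⟩ := ih (fun s t hs => hmono s t (by omega)) (fun s hs => hy s (by omega))
    have hle : ∀ t, ∑ l ∈ range S, b l t ≤ a S t := by
      intro t
      cases S with
      | zero => simp
      | succ S => exact (hb' S t (by omega)).trans (hmono S t (by omega))
    have hsum : ∑ t, ∑ l ∈ range S, b l t = ∑ l ∈ range S, y l := by
      rw [Finset.sum_comm]
      exact Finset.sum_congr rfl fun l hl => hb l (Finset.mem_range.1 hl)
    have hyS := hy S (by omega)
    rw [Finset.sum_range_succ] at hyS
    obtain ⟨e, he, hes⟩ := fill Finset.univ (fun t => a S t - ∑ l ∈ range S, b l t) (y S) (by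
      have : ∑ t, (a S t - ∑ l ∈ range S, b l t) + ∑ t, ∑ l ∈ range S, b l t = ∑ t, a S t := by
        rw [← Finset.sum_add_distrib]
        exact Finset.sum_congr rfl fun t _ => Nat.sub_add_cancel (hle t)
      omega)
    have hold : ∀ s t, s ≤ S → ∑ l ∈ range s, (if l = S then e else b l) t
        = ∑ l ∈ range s, b l t := by
      intro s t hs
      refine Finset.sum_congr rfl fun l hl => ?_
      rw [Finset.mem_range] at hl
      rw [if_neg (by omega)]
    refine ⟨fun s => if s = S then e else b s, ?_, ?_⟩
    · intro s hs
      by_cases h : s = S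
      · subst h; simpa using hes
      · simp only [h, if_false]; exact hb s (by omega)
    · intro s t hs
      by_cases h : s = S
      · subst h
        rw [Finset.sum_range_succ, hold s t le_rfl]
        simp only [if_true]
        have := he t
        have := hle t
        omega
      · rw [hold (s + 1) t (by omega)]
        exact hb' s t (by omega)

/-- Running minimum of `d` and `p (n-1), p (n-2), …`. -/
def RM (n d : ℕ) (p : ℕ → ℕ) : ℕ → ℕ
  | 0 => min d (p (n - 1))
  | s + 1 => min (RM n d p s) (p (n - 1 - (s + 1)))

lemma RM_le_d (n d : ℕ) (p : ℕ → ℕ) (s : ℕ) : RM n d p s ≤ d := by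
  induction s with
  | zero => simp [RM]
  | succ s ih => simp only [RM]; omega

lemma RM_le_p (n d : ℕ) (p : ℕ → ℕ) (s k : ℕ) (h : n - 1 - s ≤ k) (hk : k < n) :
    RM n d p s ≤ p k := by
  induction s with
  | zero =>
    have : k = n - 1 := by omega
    subst this; simp [RM]
  | succ s ih =>
    simp only [RM]
    by_cases h' : k = n - 1 - (s + 1)
    · subst h'; exact min_le_right _ _
    · exact (min_le_left _ _).trans (ih (by omega))

lemma RM_attained (n d : ℕ) (p : ℕ → ℕ) (s : ℕ) (hs : s < n) :
    RM n d p s = d ∨ ∃ k, n - 1 - s ≤ k ∧ k < n ∧ RM n d p s = p k := by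
  induction s with
  | zero =>
    simp only [RM]
    rcases min_choice d (p (n - 1)) with h | h
    · exact Or.inl h
    · exact Or.inr ⟨n - 1, by omega, by omega, h⟩
  | succ s ih =>
    simp only [RM]
    rcases min_choice (RM n d p s) (p (n - 1 - (s + 1))) with h | h
    · rw [h]
      rcases ih (by omega) with h | ⟨k, h1, h2, h3⟩
      · exact Or.inl h
      · exact Or.inr ⟨k, by omega, h2, h3⟩
    · exact Or.inr ⟨n - 1 - (s + 1), by omega, by omega, h⟩

lemma fl_mono (k t a b M : ℕ) (hk : 1 ≤ k) (h : a ≤ b + k * M) :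
    (a + t) / k ≤ (b + t) / k + M := by
  rw [← Nat.add_mul_div_left _ _ (show 0 < k by omega)]
  exact Nat.div_le_div_right (by omega)

lemma SC_decomp (n k : ℕ) (hn : 2 ≤ n) (hk : 1 ≤ k) (m : ℕ → ℕ) (z : ℕ → ℕ)
    (hz : z ∈ SC n (k • m)) :
    ∃ x : Fin k → (ℕ → ℕ), (∀ t, x t ∈ SC n m) ∧ z = ∑ t, x t := by
  rw [SC_iff n hn] at hz
  simp only [PS_smul] at hz
  obtain ⟨h0, h1, h2, h3, h4⟩ := hz
  obtain ⟨p, hp⟩ : ∃ p : ℕ → ℕ, ∀ j, j < n → p j + PS z j = k * PS m j :=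
    ⟨fun j => k * PS m j - PS z j, fun j hj => by have := h1 j hj; simp only; omega⟩
  set d := z (2 * n - 1) with hd
  -- the rounding
  obtain ⟨f, hf⟩ : ∃ f : Fin k → ℕ → ℕ, ∀ t v, f t v = (v + t) / k := ⟨_, fun _ _ => rfl⟩
  have fsum : ∀ v, ∑ t, f t v = v := by
    intro v
    simp only [hf]
    rw [Fin.sum_univ_eq_sum_range (fun t => (v + t) / k) k]
    exact hermite k hk v
  have fM : ∀ t a b M, a ≤ b + k * M → f t a ≤ f t b + M := by
    intro t a b M h
    rw [hf, hf]; exact fl_mono k t a b M hk h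
  have fm : ∀ t a b, a ≤ b → f t a ≤ f t b := by
    intro t a b h
    simpa using fM t a b 0 (by simpa using h)
  have f0 : ∀ t, f t 0 = 0 := by
    intro t
    rw [hf, zero_add]; exact Nat.div_eq_of_lt t.2
  have hp0 : p 0 = 0 := by
    have := hp 0 (by omega)
    simpa [PS_zero] using this
  have hpstep : ∀ j, j + 1 < n → p (j + 1) + z (j + 1) = p j + k * m (j + 1) := by
    intro j hj
    have e1 := hp j (by omega)
    have e2 := hp (j + 1) hj
    rw [PS_succ, PS_succ, mul_add] at e2
    omega
  have hfp : ∀ t j, j + 1 < n → f t (p (j + 1)) ≤ f t (p j) + m (j + 1) := by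
    intro t j hj
    apply fM
    have := hpstep j hj
    omega
  have hMn : PS m n = PS m (n - 1) + m n := by
    have := PS_succ m (n - 1)
    rwa [show n - 1 + 1 = n by omega] at this
  have hpn := hp (n - 1) (by omega)
  have hdp : d ≤ p (n - 1) + k * m n := by
    rw [hMn, mul_add] at h2
    omega
  have hfd : ∀ t, f t d ≤ f t (p (n - 1)) + m n := fun t => fM t _ _ _ hdp
  obtain ⟨R, hR⟩ : ∃ R, R = RM n d p := ⟨_, rfl⟩
  have hRd : ∀ s, R s ≤ d := fun s => hR ▸ RM_le_d n d p s
  have hRp : ∀ s j, n - 1 - s ≤ j → j < n → R s ≤ p j := fun s j h h' =>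
    hR ▸ RM_le_p n d p s j h h'
  have hRa : ∀ s, s < n → R s = d ∨ ∃ k, n - 1 - s ≤ k ∧ k < n ∧ R s = p k := fun s h =>
    hR ▸ RM_attained n d p s h
  have hR0 : R 0 = d ∨ R 0 = p (n - 1) := by
    rw [hR]; exact min_choice _ _
  have hRstep : ∀ s, s + 1 < n - 1 → R s ≤ R (s + 1) + k * m (n - 1 - s) := by
    intro s hs
    have e : R (s + 1) = min (R s) (p (n - 1 - (s + 1))) := by rw [hR]; rfl
    have e1 := hRp s (n - 1 - s) le_rfl (by omega)
    have e2 := hpstep (n - 1 - (s + 1)) (by omega)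
    rw [show n - 1 - (s + 1) + 1 = n - 1 - s by omega] at e2
    omega
  have hmono : ∀ a b, a ≤ b → PS m a ≤ PS m b := by
    intro a b h
    have := PS_split m a b h
    omega
  -- capacities
  have hcap : ∀ s t, s < n - 1 → 2 * f t d + PS m (n - 1 - s) + PS m (n - 1) ≤
      2 * PS m n + f t (R s) + f t (p (n - 1)) := by
    intro s t hs
    induction s with
    | zero =>
      have := hfd t
      rw [Nat.sub_zero]
      rcases hR0 with h | h <;> rw [h] <;> omega
    | succ s ih =>
      have := ih (by omega)
      have e := fM t _ _ _ (hRstep s hs)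
      have e2 := PS_succ m (n - 1 - (s + 1))
      rw [show n - 1 - (s + 1) + 1 = n - 1 - s by omega] at e2
      omega
  obtain ⟨a, ha⟩ : ∃ a : ℕ → Fin k → ℕ, ∀ s t, s < n - 1 →
      a s t + (2 * f t d + PS m (n - 1 - s) + PS m (n - 1)) =
      2 * PS m n + f t (R s) + f t (p (n - 1)) :=
    ⟨fun s t => 2 * PS m n + f t (R s) + f t (p (n - 1)) -
      (2 * f t d + PS m (n - 1 - s) + PS m (n - 1)),
      fun s t hs => Nat.sub_add_cancel (hcap s t hs)⟩
  have hasum : ∀ s, s < n - 1 →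
      ∑ t, a s t + (2 * d + k * PS m (n - 1 - s) + k * PS m (n - 1)) =
      2 * (k * PS m n) + R s + p (n - 1) := by
    intro s hs
    have : ∑ t, (a s t + (2 * f t d + PS m (n - 1 - s) + PS m (n - 1))) =
      ∑ t, (2 * PS m n + f t (R s) + f t (p (n - 1))) :=
      Finset.sum_congr rfl fun t _ => ha s t hs
    simp only [Finset.sum_add_distrib, ← Finset.mul_sum, fsum, Finset.sum_const,
      Finset.card_univ, Fintype.card_fin, smul_eq_mul] at this
    linarith
  have htail : ∀ (c : ℕ → ℕ) s, PS c (n + s) = PS c (n - 1) + ∑ l ∈ range (s + 1), c (n + l) := by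
    intro c s
    induction s with
    | zero =>
      have := PS_succ c (n - 1)
      rw [show n - 1 + 1 = n by omega] at this
      simpa using this
    | succ s ih =>
      rw [Finset.sum_range_succ, ← add_assoc, PS_succ, ih]; ring_nf
  obtain ⟨b, hb, hb'⟩ := ladder (n - 1) a (fun s => z (n + s))
    (by
      intro s t hs
      have e1 := ha s t (by omega)
      have e2 := ha (s + 1) t hs
      have e := fM t _ _ _ (hRstep s hs)
      have e3 := PS_succ m (n - 1 - (s + 1))
      rw [show n - 1 - (s + 1) + 1 = n - 1 - s by omega] at e3
      omega)
    (by
      intro s hs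
      have e1 := hasum s hs
      have e2 := htail z s
      rcases hRa s (by omega) with h | ⟨j, hj, hj', h⟩
      · have := h3 s (by omega)
        omega
      · have := h4 s j (by omega) hj hj'
        have := hp j hj'
        omega)
  obtain ⟨x, hx⟩ : ∃ x : Fin k → ℕ → ℕ, ∀ t l, x t l =
      if l = 0 then 0 else if l < n then f t (p (l - 1)) + m l - f t (p l)
      else if l < 2 * n - 1 then b (l - n) t else if l = 2 * n - 1 then f t d else 0 :=
    ⟨_, fun _ _ => rfl⟩
  have hxd : ∀ t, x t (2 * n - 1) = f t d := by
    intro t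
    rw [hx, if_neg (by omega), if_neg (by omega), if_neg (by omega), if_pos rfl]
  have hxlow : ∀ t j, j + 1 < n → x t (j + 1) + f t (p (j + 1)) = f t (p j) + m (j + 1) := by
    intro t j hj
    rw [hx, if_neg (by omega), if_pos hj]
    have := hfp t j hj
    simp only [Nat.add_sub_cancel]
    omega
  have hxhigh : ∀ t s, s < n - 1 → x t (n + s) = b s t := by
    intro t s hs
    rw [hx, if_neg (by omega), if_neg (by omega), if_pos (by omega), Nat.add_sub_cancel_left]
  have hPx : ∀ t j, j < n → PS (x t) j + f t (p j) = PS m j := by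
    intro t j hj
    induction j with
    | zero => simp [PS_zero, hp0, f0]
    | succ j ih =>
      have := ih (by omega)
      have := hxlow t j hj
      rw [PS_succ, PS_succ]
      omega
  have hPx' : ∀ t s, s < n - 1 → PS (x t) (n + s) + 2 * f t d + PS m (n - 1 - s) ≤
      2 * PS m n + f t (R s) := by
    intro t s hs
    have e1 := htail (x t) s
    have e2 : ∑ l ∈ range (s + 1), x t (n + l) = ∑ l ∈ range (s + 1), b l t :=
      Finset.sum_congr rfl fun l hl => hxhigh t l (by rw [Finset.mem_range] at hl; omega)
    have e3 := hb' s t hs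
    have e4 := ha s t hs
    have e5 := hPx t (n - 1) (by omega)
    omega
  refine ⟨x, ?_, ?_⟩
  · intro t
    rw [SC_iff n hn]
    refine ⟨?_, ?_, ?_, ?_, ?_⟩
    · rintro l (rfl | h)
      · simp [hx]
      · rw [hx, if_neg (by omega), if_neg (by omega), if_neg (by omega), if_neg (by omega)]
    · intro j hj
      have := hPx t j hj
      omega
    · have := hPx t (n - 1) (by omega)
      have := hfd t
      rw [hxd]
      omega
    · intro s hs
      have := hPx' t s (by omega)
      have := fm t _ _ (hRd s)
      rw [hxd]
      omega
    · intro s j hs hj hj'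
      have := hPx' t s (by omega)
      have := fm t _ _ (hRp s j hj hj')
      have := hPx t j hj'
      rw [hxd]
      omega
  · funext l
    rw [Finset.sum_apply]
    by_cases hl0 : l = 0
    · subst hl0
      rw [h0 0 (Or.inl rfl)]
      simp [hx]
    by_cases hl1 : l < n
    · obtain ⟨j, rfl⟩ : ∃ j, l = j + 1 := ⟨l - 1, by omega⟩
      have e : ∑ t, (x t (j + 1) + f t (p (j + 1))) = ∑ t, (f t (p j) + m (j + 1)) :=
        Finset.sum_congr rfl fun t _ => hxlow t j hl1
      simp only [Finset.sum_add_distrib, fsum, Finset.sum_const,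
        Finset.card_univ, Fintype.card_fin, smul_eq_mul] at e
      have := hpstep j hl1
      omega
    by_cases hl2 : l < 2 * n - 1
    · obtain ⟨s, rfl⟩ : ∃ s, l = n + s := ⟨l - n, by omega⟩
      rw [Finset.sum_congr rfl fun t _ => hxhigh t s (by omega)]
      exact (hb s (by omega)).symm
    by_cases hl3 : l = 2 * n - 1
    · subst hl3
      rw [Finset.sum_congr rfl fun t _ => hxd t, fsum]
    · rw [h0 l (Or.inr (by omega))]
      symm
      apply Finset.sum_eq_zero
      intro t _
      rw [hx, if_neg (by omega), if_neg (by omega), if_neg (by omega), if_neg (by omega)]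

/-- Normality of the polytope in type `C`: `S_C(k·m)` is the `k`-fold Minkowski sum of
`S_C(m)` with itself. -/
theorem SC_normal (n k : ℕ) (hn : 2 ≤ n) (hk : 1 ≤ k) (m : ℕ → ℕ) (z : ℕ → ℕ) :
    z ∈ SC n (k • m) ↔
      ∃ x : Fin k → (ℕ → ℕ), (∀ t, x t ∈ SC n m) ∧ z = ∑ t, x t := by
  constructor
  · exact SC_decomp n k hn hk m z
  · rintro ⟨x, hx, rfl⟩
    simpa using SC_sum n hn m Finset.univ x hx
end

section
/- For every m ∈ ℕ^n and every integer k ≥ 1, S_B(k·m) equals the k-fold Minkowski sum of S_B(m) with itself: every element of S_B(k·m) can be written as x_1 + ⋯ + x_k with all x_t ∈ S_B(m), and conversely every such sum lies in S_B(k·m). (This expresses the normality of the polytope P_w(λ), part (1) of the paper's Main Theorem, in type B.) -/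
open Finset
open scoped Pointwise

/-- The quantity `q_j(m) = 2 m_1 + (m_2 + ⋯ + m_{j-1}) + 2(m_j + ⋯ + m_{n-1}) + m_n`
appearing in the type-`B` inequalities. -/
def qB (n : ℕ) (m : ℕ → ℕ) (j : ℕ) : ℕ :=
  2 * m 1 + (∑ l ∈ Icc 2 (j - 1), m l) + 2 * (∑ l ∈ Icc j (n - 1), m l) + m n

/-- The lattice-point set `S_B(m)` of the polytope `P_w(λ)` in type `B_n`, where
`w = s_1 ⋯ s_{n-1} s_n s_{n-1} ⋯ s_1` and `λ = m_1 ω_1 + ⋯ + m_n ω_n`.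
A point is a 1-based tuple `c_1, …, c_{2n-1}` of nonnegative integers (all other
coordinates vanish), subject to the Dyck-path inequalities (B1), the degree-path
inequalities (B2) and the inequalities (B3)–(B4) from paths with coefficients. -/
def SB (n : ℕ) (m : ℕ → ℕ) : Set (ℕ → ℕ) :=
  {c | (∀ l, (l = 0 ∨ 2 * n - 1 < l) → c l = 0) ∧
    (∀ j, 1 ≤ j → j < n →
      ∑ l ∈ Icc 1 j, c l ≤ ∑ l ∈ Icc 1 j, m l) ∧
    (∀ j, 2 ≤ j → j ≤ n →
      ∑ l ∈ Icc 1 (2 * n + 1 - j), c l ≤ qB n m j) ∧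
    (∀ j k, 2 ≤ j → j ≤ n → j - 1 ≤ k → k < n →
      2 * (∑ l ∈ Icc 1 k, c l) + ∑ l ∈ Icc (k + 1) (2 * n + 1 - j), c l ≤
        qB n m j + ∑ l ∈ Icc 2 k, m l) ∧
    (∀ j, 2 ≤ j → j ≤ n →
      2 * (∑ l ∈ Icc 1 (n - 1), c l) + c n + 2 * (∑ l ∈ Icc (n + 1) (2 * n + 1 - j), c l) ≤
        qB n m j + (∑ l ∈ Icc 2 n, m l) + ∑ l ∈ Icc j (n - 1), m l)}

/-- Prefix sums, as integers. -/
def prefB (c : ℕ → ℕ) (l : ℕ) : ℤ := ∑ i ∈ Icc 1 l, (c i : ℤ)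

/-- The inequalities of `SB`, written for prefix sums. -/
structure QB (n : ℕ) (W : ℤ) (M C : ℕ → ℤ) : Prop where
  zero : C 0 = 0
  mono : ∀ a b, a ≤ b → b ≤ 2 * n - 1 → C a ≤ C b
  b1 : ∀ j, 1 ≤ j → j < n → C j ≤ W * M j
  b2 : ∀ j, 2 ≤ j → j ≤ n → C (2 * n + 1 - j) ≤ W * (M 1 + (M (n - 1) + M n - M (j - 1)))
  b3 : ∀ j k, 2 ≤ j → j ≤ n → j - 1 ≤ k → k < n →
    C k + C (2 * n + 1 - j) ≤ W * (M k + (M (n - 1) + M n - M (j - 1)))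
  b4 : ∀ j, 2 ≤ j → j ≤ n →
    C (n - 1) - C n + 2 * C (2 * n + 1 - j) ≤ 2 * (W * (M (n - 1) + M n - M (j - 1)))

lemma prefB_zero (c : ℕ → ℕ) : prefB c 0 = 0 := by simp [prefB]

lemma prefB_succ (c : ℕ → ℕ) (l : ℕ) : prefB c (l + 1) = prefB c l + c (l + 1) := by
  unfold prefB
  rw [Finset.sum_Icc_succ_top (by omega)]

lemma prefB_mono (c : ℕ → ℕ) : Monotone (prefB c) :=
  monotone_nat_of_le_succ fun l => by rw [prefB_succ]; omega

lemma cast_sum_Icc (c : ℕ → ℕ) (a b : ℕ) (ha : 1 ≤ a) (hab : a ≤ b + 1) :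
    ((∑ l ∈ Icc a b, c l : ℕ) : ℤ) = prefB c b - prefB c (a - 1) := by
  induction b with
  | zero =>
    have : a = 1 := by omega
    subst this
    simp [prefB]
  | succ b ih =>
    by_cases h : a = b + 2
    · subst h
      simp
    · rw [Finset.sum_Icc_succ_top (by omega), prefB_succ]
      push_cast
      have := ih (by omega)
      push_cast at this
      rw [this]; ring

lemma prefB_smul (W : ℕ) (m : ℕ → ℕ) (l : ℕ) : prefB (W • m) l = W * prefB m l := by
  simp [prefB, Finset.mul_sum]

lemma prefB_add (c d : ℕ → ℕ) (l : ℕ) : prefB (c + d) l = prefB c l + prefB d l := by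
  simp [prefB, Finset.sum_add_distrib]

lemma qB_cast (n : ℕ) (m : ℕ → ℕ) (j : ℕ) (hj : 2 ≤ j) (hjn : j ≤ n) :
    ((qB n m j : ℕ) : ℤ) = prefB m 1 + (prefB m (n - 1) + prefB m n - prefB m (j - 1)) := by
  unfold qB
  have h1 := cast_sum_Icc m 2 (j - 1) (by omega) (by omega)
  have h2 := cast_sum_Icc m j (n - 1) (by omega) (by omega)
  have h3 := prefB_succ m (n - 1)
  have h4 : prefB m 1 = m 1 := by simp [prefB]
  rw [show n - 1 + 1 = n by omega] at h3
  simp only [show 2 - 1 = 1 from rfl] at h1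
  rw [Nat.cast_add, Nat.cast_add, Nat.cast_add, Nat.cast_mul, Nat.cast_mul, h1, h2]
  push_cast
  linarith

lemma mem_SB_iff (n W : ℕ) (hn : 2 ≤ n) (m c : ℕ → ℕ) :
    c ∈ SB n (W • m) ↔ (∀ l, (l = 0 ∨ 2 * n - 1 < l) → c l = 0) ∧
      QB n W (prefB m) (prefB c) := by
  have e1 : ∀ b, ((∑ l ∈ Icc 1 b, c l : ℕ) : ℤ) = prefB c b := fun b => by
    rw [cast_sum_Icc c 1 b le_rfl (by omega)]; simp [prefB_zero]
  have e2 : ∀ b, ((∑ l ∈ Icc 1 b, (W • m) l : ℕ) : ℤ) = W * prefB m b := fun b => by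
    rw [cast_sum_Icc _ 1 b le_rfl (by omega)]; simp only [prefB_smul, Nat.sub_self, prefB_zero, mul_zero, sub_zero]
  have c1 : ∀ j, 1 ≤ j → j < n → ((∑ l ∈ Icc 1 j, c l ≤ ∑ l ∈ Icc 1 j, (W • m) l) ↔
      prefB c j ≤ W * prefB m j) := fun j _ _ => by
    rw [← Nat.cast_le (α := ℤ), e1, e2]
  have c2 : ∀ j, 2 ≤ j → j ≤ n → ((∑ l ∈ Icc 1 (2 * n + 1 - j), c l ≤ qB n (W • m) j) ↔
      prefB c (2 * n + 1 - j) ≤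
        W * (prefB m 1 + (prefB m (n - 1) + prefB m n - prefB m (j - 1)))) := fun j h1 h2 => by
    rw [← Nat.cast_le (α := ℤ), e1, qB_cast _ _ _ h1 h2]
    simp only [prefB_smul]
    constructor <;> intro h <;> linarith
  have c3 : ∀ j k, 2 ≤ j → j ≤ n → j - 1 ≤ k → k < n →
      ((2 * (∑ l ∈ Icc 1 k, c l) + ∑ l ∈ Icc (k + 1) (2 * n + 1 - j), c l ≤
        qB n (W • m) j + ∑ l ∈ Icc 2 k, (W • m) l) ↔
      prefB c k + prefB c (2 * n + 1 - j) ≤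
        W * (prefB m k + (prefB m (n - 1) + prefB m n - prefB m (j - 1)))) :=
    fun j k h1 h2 h3 h4 => by
    rw [← Nat.cast_le (α := ℤ), Nat.cast_add, Nat.cast_add, Nat.cast_mul, e1,
      qB_cast _ _ _ h1 h2, cast_sum_Icc c _ _ (by omega) (by omega),
      cast_sum_Icc (W • m) _ _ (by omega) (by omega)]
    simp only [prefB_smul, Nat.add_sub_cancel, show 2 - 1 = 1 from rfl]
    push_cast
    constructor <;> intro h <;> linarith
  have c4 : ∀ j, 2 ≤ j → j ≤ n →
      ((2 * (∑ l ∈ Icc 1 (n - 1), c l) + c n + 2 * (∑ l ∈ Icc (n + 1) (2 * n + 1 - j), c l) ≤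
        qB n (W • m) j + (∑ l ∈ Icc 2 n, (W • m) l) + ∑ l ∈ Icc j (n - 1), (W • m) l) ↔
      prefB c (n - 1) - prefB c n + 2 * prefB c (2 * n + 1 - j) ≤
        2 * (W * (prefB m (n - 1) + prefB m n - prefB m (j - 1)))) :=
    fun j h1 h2 => by
    have h3 := prefB_succ c (n - 1)
    rw [show n - 1 + 1 = n by omega] at h3
    rw [← Nat.cast_le (α := ℤ), Nat.cast_add, Nat.cast_add, Nat.cast_add, Nat.cast_add,
      Nat.cast_mul, Nat.cast_mul, e1,
      qB_cast _ _ _ h1 h2, cast_sum_Icc c _ _ (by omega) (by omega),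
      cast_sum_Icc (W • m) _ _ (by omega) (by omega),
      cast_sum_Icc (W • m) _ _ (by omega) (by omega)]
    simp only [prefB_smul, Nat.add_sub_cancel, show 2 - 1 = 1 from rfl]
    push_cast
    constructor <;> intro h <;> linarith
  constructor
  · rintro ⟨h0, h1, h2, h3, h4⟩
    exact ⟨h0, prefB_zero c, fun a b hab _ => prefB_mono c hab,
      fun j a b => (c1 j a b).1 (h1 j a b),
      fun j a b => (c2 j a b).1 (h2 j a b),
      fun j k a b d e => (c3 j k a b d e).1 (h3 j k a b d e),
      fun j a b => (c4 j a b).1 (h4 j a b)⟩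
  · rintro ⟨h0, -, -, h1, h2, h3, h4⟩
    exact ⟨h0,
      fun j a b => (c1 j a b).2 (h1 j a b),
      fun j a b => (c2 j a b).2 (h2 j a b),
      fun j k a b d e => (c3 j k a b d e).2 (h3 j k a b d e),
      fun j a b => (c4 j a b).2 (h4 j a b)⟩

lemma QB.add {n : ℕ} {W V : ℤ} {M C D : ℕ → ℤ} (h : QB n W M C) (g : QB n V M D) :
    QB n (W + V) M (C + D) where
  zero := by simp [h.zero, g.zero]
  mono a b x y := by
    have := h.mono a b x y; have := g.mono a b x y
    simp only [Pi.add_apply]; linarith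
  b1 j x y := by
    have := h.b1 j x y; have := g.b1 j x y
    simp only [Pi.add_apply]; linarith
  b2 j x y := by
    have := h.b2 j x y; have := g.b2 j x y
    simp only [Pi.add_apply]; linarith
  b3 j k x y z w := by
    have := h.b3 j k x y z w; have := g.b3 j k x y z w
    simp only [Pi.add_apply]; linarith
  b4 j x y := by
    have := h.b4 j x y; have := g.b4 j x y
    simp only [Pi.add_apply]; linarith

/-- One part of the splitting. -/
lemma QB.part {n : ℕ} (hn : 2 ≤ n) {N W t : ℤ} {M C : ℕ → ℤ} (hM : Monotone M) (hW : 0 ≤ W)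
    (hN : 0 ≤ N) (hC : QB n N M C) (ht0 : 0 ≤ t)
    (hts : ∀ j, 2 ≤ j → j ≤ n → C (2 * n + 1 - j) ≤ t + N * (M (n - 1) + M n - M (j - 1)))
    (htt : t = 0 ∨ ∃ j, 2 ≤ j ∧ j ≤ n ∧
      C (2 * n + 1 - j) = t + N * (M (n - 1) + M n - M (j - 1)))
    (htM : t ≤ N * M 1)
    (hS : C (n - 1) + 2 * t ≤ C n)
    (h H : ℤ → ℤ) (hmono : Monotone h) (h0 : h 0 = 0) (hadd : ∀ v w, h (v + N * w) = h v + W * w)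
    (Hmono : ∀ a b, C (n - 1) + 2 * t ≤ a → a ≤ b → H a ≤ H b)
    (Hlow : ∀ a, C (n - 1) + 2 * t ≤ a → -h (-C (n - 1)) + 2 * h t ≤ H a)
    (Hup : ∀ a, H a = h a ∨ (a < t + N * M n ∧ H a ≤ h (t + N * M n))) :
    QB n W M (fun l => if l < n then -h (-C l) else H (C l)) := by
  have hle : ∀ v w u, v ≤ w + N * u → h v ≤ h w + W * u := fun v w u hv => by
    rw [← hadd]; exact hmono hv
  have hτ : 0 ≤ h t := by rw [← h0]; exact hmono ht0
  have hτM : h t ≤ W * M 1 := by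
    have := hle t 0 (M 1) (by linarith)
    linarith
  have hK : ∀ j, j ≤ n → M n ≤ M (n - 1) + M n - M (j - 1) := fun j hj => by
    have := hM (show j - 1 ≤ n - 1 by omega)
    linarith
  have hWK : ∀ j, j ≤ n → W * M n ≤ W * (M (n - 1) + M n - M (j - 1)) := fun j hj =>
    mul_le_mul_of_nonneg_left (hK j hj) hW
  have hp : ∀ j, j ≤ n → ¬ (2 * n + 1 - j < n) := fun j hj => by omega
  refine ⟨?_, ?_, ?_, ?_, ?_, ?_⟩
  · simp [hC.zero, h0, show 0 < n by omega]
  · intro a b hab hb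
    have hCab := hC.mono a b hab hb
    by_cases ha : a < n
    · by_cases hbn : b < n
      · rw [if_pos ha, if_pos hbn]
        exact neg_le_neg (hmono (by linarith))
      · rw [if_pos ha, if_neg hbn]
        have h1 := hC.mono a (n - 1) (by omega) (by omega)
        have h2 := hC.mono n b (by omega) hb
        have h3 := Hlow (C b) (by linarith)
        have h4 := hmono (show -C (n - 1) ≤ -C a by linarith)
        linarith
    · rw [if_neg ha, if_neg (by omega)]
      have h2 := hC.mono n a (by omega) (by omega)
      exact Hmono _ _ (by linarith) hCab
  · intro j h1 h2
    rw [if_pos h2]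
    have := hle 0 (-C j) (M j) (by linarith [hC.b1 j h1 h2])
    linarith
  · intro j h1 h2
    rw [if_neg (hp j h2)]
    rcases Hup (C (2 * n + 1 - j)) with e | ⟨e, f⟩
    · rw [e]
      have := hle (C (2 * n + 1 - j)) 0 _ (by simpa using hC.b2 j h1 h2)
      linarith
    · rw [hadd] at f
      linarith [hWK j h2]
  · intro j k h1 h2 h3 h4
    rw [if_neg (hp j h2), if_pos h4]
    rcases Hup (C (2 * n + 1 - j)) with e | ⟨e, f⟩
    · rw [e]
      have := hle (C (2 * n + 1 - j)) (-C k) (M k + (M (n - 1) + M n - M (j - 1)))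
        (by linarith [hC.b3 j k h1 h2 h3 h4])
      linarith
    · rw [hadd] at f
      have key : t ≤ -C k + N * M k := by
        rcases htt with e0 | ⟨i, i1, i2, i3⟩
        · linarith [hC.b1 k (by omega) h4]
        · have hlt : i < j := by
            by_contra hij
            have := hC.mono (2 * n + 1 - i) (2 * n + 1 - j) (by omega) (by omega)
            have := mul_le_mul_of_nonneg_left (hK i i2) hN
            linarith
          linarith [hC.b3 i k i1 i2 (by omega) h4]
      have := hle _ _ _ key
      linarith [hWK j h2]
  · intro j h1 h2
    rw [if_neg (hp j h2), if_pos (by omega), if_neg (by omega)]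
    have hl := Hlow (C n) hS
    rcases Hup (C (2 * n + 1 - j)) with e | ⟨e, f⟩
    · rw [e]
      have := hle _ _ _ (hts j h1 h2)
      linarith
    · rw [hadd] at f
      linarith [hWK j h2]

lemma exists_tB (n : ℕ) (s : ℕ → ℤ) : ∃ t : ℤ, 0 ≤ t ∧ (∀ j, 2 ≤ j → j ≤ n → s j ≤ t) ∧
    (t = 0 ∨ ∃ j, 2 ≤ j ∧ j ≤ n ∧ s j = t) := by
  induction n with
  | zero => exact ⟨0, le_rfl, fun j _ _ => by omega, Or.inl rfl⟩
  | succ n ih =>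
    obtain ⟨t, h0, h1, h2⟩ := ih
    by_cases hc : 2 ≤ n + 1 ∧ t < s (n + 1)
    · refine ⟨s (n + 1), by omega, fun j a b => ?_, Or.inr ⟨n + 1, hc.1, le_rfl, rfl⟩⟩
      rcases Nat.lt_or_ge j (n + 1) with h | h
      · have := h1 j a (by omega); omega
      · rw [show j = n + 1 by omega]
    · refine ⟨t, h0, fun j a b => ?_, ?_⟩
      · rcases Nat.lt_or_ge j (n + 1) with h | h
        · exact h1 j a (by omega)
        · rw [show j = n + 1 by omega]; omega
      · rcases h2 with h | ⟨j, a, b, c⟩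
        · exact Or.inl h
        · exact Or.inr ⟨j, a, by omega, c⟩

lemma QB.split {n : ℕ} (hn : 2 ≤ n) {k : ℤ} (hk : 0 ≤ k) {M C : ℕ → ℤ} (hM : Monotone M)
    (hM0 : 0 ≤ M 0) (hC : QB n (k + 1) M C) :
    ∃ C1 C2 : ℕ → ℤ, C = C1 + C2 ∧ QB n k M C1 ∧ QB n 1 M C2 := by
  obtain ⟨t, ht0, hts, htt⟩ := exists_tB n
    (fun j => C (2 * n + 1 - j) - (k + 1) * (M (n - 1) + M n - M (j - 1)))
  have hN : 0 < k + 1 := by linarith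
  have hts' : ∀ j, 2 ≤ j → j ≤ n →
      C (2 * n + 1 - j) ≤ t + (k + 1) * (M (n - 1) + M n - M (j - 1)) := fun j a b => by
    have := hts j a b
    linarith
  have htt' : t = 0 ∨ ∃ j, 2 ≤ j ∧ j ≤ n ∧
      C (2 * n + 1 - j) = t + (k + 1) * (M (n - 1) + M n - M (j - 1)) := by
    rcases htt with h | ⟨j, a, b, c⟩
    · exact Or.inl h
    · exact Or.inr ⟨j, a, b, by linarith⟩
  have htM : t ≤ (k + 1) * M 1 := by
    rcases htt' with h | ⟨j, a, b, c⟩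
    · rw [h]
      exact mul_nonneg hN.le (hM0.trans (hM (by omega)))
    · linarith [hC.b2 j a b]
  have hS : C (n - 1) + 2 * t ≤ C n := by
    rcases htt' with h | ⟨j, a, b, c⟩
    · linarith [hC.mono (n - 1) n (by omega) (by omega)]
    · linarith [hC.b4 j a b]
  have hYt : t ≤ -C (n - 1) + (k + 1) * M n := by
    have h1 := mul_le_mul_of_nonneg_left (hM (show n - 1 ≤ n by omega)) hN.le
    rcases htt' with h | ⟨j, a, b, c⟩
    · linarith [hC.b1 (n - 1) (by omega) (by omega)]
    · linarith [hC.b3 j (n - 1) a b (by omega) (by omega)]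
  -- the rounding functions
  obtain ⟨f, hf⟩ : ∃ f : ℤ → ℤ, f = fun v => v / (k + 1) := ⟨_, rfl⟩
  obtain ⟨g, hg⟩ : ∃ g : ℤ → ℤ, g = fun v => v - v / (k + 1) := ⟨_, rfl⟩
  have hfg : ∀ v, g v + f v = v := fun v => by rw [hf, hg]; ring
  have fmono : Monotone f := fun a b hab => by
    rw [hf]; exact Int.ediv_le_ediv hN hab
  have fadd : ∀ v w, f (v + (k + 1) * w) = f v + 1 * w := fun v w => by
    rw [hf, one_mul]; exact Int.add_mul_ediv_left _ _ hN.ne'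
  have gadd : ∀ v w, g (v + (k + 1) * w) = g v + k * w := fun v w => by
    have := hfg (v + (k + 1) * w)
    have := hfg v
    have := fadd v w
    linarith
  have gmono : Monotone g := by
    apply monotone_int_of_le_succ
    intro v
    have h1 : f (v + 1) ≤ f v + 1 := by
      have := fadd v 1
      rw [← one_mul (1 : ℤ), mul_one] at this
      have h2 := fmono (show v + 1 ≤ v + (k + 1) * 1 by linarith)
      have h3 := fadd v 1
      linarith
    have := hfg v
    have := hfg (v + 1)
    linarith
  have f0 : f 0 = 0 := by simp [hf]
  have g0 : g 0 = 0 := by simp [hg]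
  obtain ⟨T, hT⟩ : ∃ T, T = t + (k + 1) * M n := ⟨_, rfl⟩
  obtain ⟨S, hSd⟩ : ∃ S, S = C (n - 1) + 2 * t := ⟨_, rfl⟩
  obtain ⟨a1, ha1⟩ : ∃ a, a = -f (-C (n - 1)) + 2 * f t := ⟨_, rfl⟩
  obtain ⟨a2, ha2⟩ : ∃ a, a = -g (-C (n - 1)) + 2 * g t := ⟨_, rfl⟩
  have hab1 : a1 ≤ f T := by
    have := fmono hYt
    rw [fadd] at this
    rw [hT, fadd]; linarith
  have hab2 : a2 ≤ g T := by
    have := gmono hYt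
    rw [gadd] at this
    rw [hT, gadd]; linarith
  have haS : a1 + a2 = S := by
    have := hfg t
    have := hfg (-C (n - 1))
    linarith
  have hTT := hfg T
  obtain ⟨F, hF⟩ : ∃ F : ℤ → ℤ, F = fun X => if X < T then min (f T) (a1 + (X - S)) else f X :=
    ⟨_, rfl⟩
  obtain ⟨G, hG⟩ : ∃ G : ℤ → ℤ, G = fun X => X - F X := ⟨_, rfl⟩
  have Fa : ∀ X, X < T → F X = min (f T) (a1 + (X - S)) := fun X h => by rw [hF]; simp [h]
  have Fb : ∀ X, ¬ X < T → F X = f X := fun X h => by rw [hF]; simp [h]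
  have Ga : ∀ X, X < T → G X = max (X - f T) (X - (a1 + (X - S))) := fun X h => by
    rw [hG]; simp only [Fa X h]; omega
  have Gb : ∀ X, ¬ X < T → G X = g X := fun X h => by
    rw [hG]; simp only [Fb X h]; linarith [hfg X]
  refine ⟨_, _, ?_, QB.part hn hM hk hN.le hC ht0 hts' htt' htM hS g G gmono g0 gadd ?_ ?_ ?_,
    QB.part hn hM zero_le_one hN.le hC ht0 hts' htt' htM hS f F fmono f0 fadd ?_ ?_ ?_⟩
  · funext l
    simp only [Pi.add_apply]
    split_ifs
    · linarith [hfg (-C l)]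
    · rw [hG]; ring
  all_goals simp only [← hSd, ← ha1, ← ha2, ← hT]
  · intro a b ha hab
    by_cases h1 : a < T
    · rw [Ga a h1]
      by_cases h2 : b < T
      · rw [Ga b h2]; omega
      · rw [Gb b h2]
        have := gmono (not_lt.1 h2)
        omega
    · rw [Gb a h1, Gb b (by omega)]; exact gmono hab
  · intro a ha
    by_cases h1 : a < T
    · rw [Ga a h1]; omega
    · rw [Gb a h1]; exact hab2.trans (gmono (not_lt.1 h1))
  · intro a
    by_cases h1 : a < T
    · refine Or.inr ⟨h1, ?_⟩
      rw [Ga a h1]; omega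
    · exact Or.inl (Gb a h1)
  · intro a b ha hab
    by_cases h1 : a < T
    · rw [Fa a h1]
      by_cases h2 : b < T
      · rw [Fa b h2]; omega
      · rw [Fb b h2]
        have := fmono (not_lt.1 h2)
        omega
    · rw [Fb a h1, Fb b (by omega)]; exact fmono hab
  · intro a ha
    by_cases h1 : a < T
    · rw [Fa a h1]; omega
    · rw [Fb a h1]; exact hab1.trans (fmono (not_lt.1 h1))
  · intro a
    by_cases h1 : a < T
    · refine Or.inr ⟨h1, ?_⟩
      rw [Fa a h1]; omega
    · exact Or.inl (Fb a h1)

/-- Increments of a prefix-sum function. -/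
def incB (n : ℕ) (C : ℕ → ℤ) (l : ℕ) : ℕ :=
  if l = 0 ∨ 2 * n - 1 < l then 0 else (C l - C (l - 1)).toNat

lemma prefB_inc {n : ℕ} {W : ℤ} {M C : ℕ → ℤ} (h : QB n W M C) (l : ℕ) (hl : l ≤ 2 * n - 1) :
    prefB (incB n C) l = C l := by
  induction l with
  | zero => rw [prefB_zero, h.zero]
  | succ l ih =>
    rw [prefB_succ, ih (by omega), incB, if_neg (by omega)]
    have := h.mono l (l + 1) (by omega) hl
    simp only [Nat.add_sub_cancel]
    omega

lemma QB.congr {n : ℕ} (hn : 2 ≤ n) {W : ℤ} {M C D : ℕ → ℤ} (h : QB n W M C)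
    (e : ∀ l, l ≤ 2 * n - 1 → D l = C l) : QB n W M D where
  zero := by rw [e 0 (by omega), h.zero]
  mono a b x y := by rw [e a (by omega), e b y]; exact h.mono a b x y
  b1 j x y := by rw [e j (by omega)]; exact h.b1 j x y
  b2 j x y := by rw [e _ (by omega)]; exact h.b2 j x y
  b3 j k x y z w := by rw [e k (by omega), e _ (by omega)]; exact h.b3 j k x y z w
  b4 j x y := by
    rw [e (n - 1) (by omega), e n (by omega), e _ (by omega)]; exact h.b4 j x y

lemma incB_mem {n : ℕ} (hn : 2 ≤ n) {W : ℕ} {m : ℕ → ℕ} {C : ℕ → ℤ}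
    (h : QB n W (prefB m) C) : incB n C ∈ SB n (W • m) := by
  rw [mem_SB_iff n W hn]
  exact ⟨fun l hl => by simp [incB, hl], h.congr hn fun l hl => prefB_inc h l hl⟩

lemma SB_succ (n k : ℕ) (hn : 2 ≤ n) (m z : ℕ → ℕ) :
    z ∈ SB n ((k + 1) • m) ↔ ∃ x y, x ∈ SB n m ∧ y ∈ SB n (k • m) ∧ z = x + y := by
  constructor
  · intro hz
    obtain ⟨hz0, hz1⟩ := (mem_SB_iff n (k + 1) hn m z).1 hz
    push_cast at hz1
    obtain ⟨C1, C2, e, q1, q2⟩ := QB.split hn (Int.natCast_nonneg k) (prefB_mono m)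
      (by rw [prefB_zero]) hz1
    have q2' : QB n ((1 : ℕ) : ℤ) (prefB m) C2 := by simpa using q2
    refine ⟨incB n C2, incB n C1, by simpa using incB_mem hn q2', incB_mem hn q1, ?_⟩
    funext l
    by_cases hl : l = 0 ∨ 2 * n - 1 < l
    · simp [hz0 l hl, incB, hl]
    · simp only [Pi.add_apply, incB, if_neg hl]
      have h1 := q1.mono (l - 1) l (by omega) (by omega)
      have h2 := q2.mono (l - 1) l (by omega) (by omega)
      have h3 := prefB_succ z (l - 1)
      have h4 := congrFun e l
      have h5 := congrFun e (l - 1)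
      rw [show l - 1 + 1 = l by omega] at h3
      simp only [Pi.add_apply] at h4 h5
      omega
  · rintro ⟨x, y, hx, hy, rfl⟩
    have hx' : x ∈ SB n (1 • m) := by simpa using hx
    obtain ⟨x0, x1⟩ := (mem_SB_iff n 1 hn m x).1 hx'
    obtain ⟨y0, y1⟩ := (mem_SB_iff n k hn m y).1 hy
    rw [mem_SB_iff n (k + 1) hn]
    refine ⟨fun l hl => by simp [x0 l hl, y0 l hl], ?_⟩
    have := y1.add x1
    push_cast at this ⊢
    exact this.congr hn fun l _ => by rw [prefB_add, Pi.add_apply, add_comm]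

/-- Normality of the polytope in type `B`: `S_B(k·m)` is the `k`-fold Minkowski sum of
`S_B(m)` with itself. -/
theorem SB_normal (n k : ℕ) (hn : 2 ≤ n) (hk : 1 ≤ k) (m : ℕ → ℕ) (z : ℕ → ℕ) :
    z ∈ SB n (k • m) ↔
      ∃ x : Fin k → (ℕ → ℕ), (∀ t, x t ∈ SB n m) ∧ z = ∑ t, x t := by
  induction k, hk using Nat.le_induction generalizing z with
  | base =>
    rw [one_smul]
    constructor
    · intro h
      exact ⟨fun _ => z, fun _ => h, by simp⟩
    · rintro ⟨x, hx, rfl⟩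
      simpa using hx 0
  | succ k hk ih =>
    rw [SB_succ n k hn]
    constructor
    · rintro ⟨x, y, hx, hy, rfl⟩
      obtain ⟨w, hw, rfl⟩ := (ih y).1 hy
      refine ⟨Fin.cons x w, fun t => ?_, by simp [Fin.sum_univ_succ]⟩
      refine Fin.cases ?_ (fun i => ?_) t
      · simpa using hx
      · simpa using hw i
    · rintro ⟨x, hx, rfl⟩
      exact ⟨x 0, ∑ i : Fin k, x i.succ, hx 0, (ih _).2 ⟨fun i => x i.succ, fun i => hx _, rfl⟩,
        Fin.sum_univ_succ _⟩
end

section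
/- For every m ∈ ℕ^n and every integer k ≥ 1, S_D(k·m) equals the k-fold Minkowski sum of S_D(m) with itself: every element of S_D(k·m) can be written as x_1 + ⋯ + x_k with all x_t ∈ S_D(m), and conversely every such sum lies in S_D(k·m). (This expresses the normality of the polytope P_w(λ), part (1) of the paper's Main Theorem, in type D.) -/
open Finset
open scoped Pointwise

/-- The quantity `Q_d(m) = (m_1 + ⋯ + m_{d-1}) + 2(m_d + ⋯ + m_{n-2}) + m_{n-1} + m_n`
appearing in the type-`D` inequalities. -/
def QD (n : ℕ) (m : ℕ → ℕ) (d : ℕ) : ℕ :=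
  (∑ l ∈ Icc 1 (d - 1), m l) + 2 * (∑ l ∈ Icc d (n - 2), m l) + m (n - 1) + m n

/-- The lattice-point set `S_D(m)` of the polytope `P_w(λ)` in type `D_n`, where
`w = s_1 ⋯ s_{n-1} s_n s_{n-2} ⋯ s_1` and `λ = m_1 ω_1 + ⋯ + m_n ω_n`.
A point is a triple `(a, b, d)` where `a` is the 1-based tuple `a_1, …, a_{n-1}`,
`b ∈ ℕ` and `d` is the 1-based tuple `d_2, …, d_{n-1}` (all other coordinates vanish),
subject to the Dyck-path inequalities (D1)–(D4), the degree-path inequalities (D5)–(D6)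
and the inequalities (D7) from paths with coefficients. -/
def SD (n : ℕ) (m : ℕ → ℕ) : Set ((ℕ → ℕ) × ℕ × (ℕ → ℕ)) :=
  {x | (∀ l, (l = 0 ∨ n - 1 < l) → x.1 l = 0) ∧
    (∀ l, (l ≤ 1 ∨ n - 1 < l) → x.2.2 l = 0) ∧
    (∀ j, 1 ≤ j → j ≤ n - 1 →
      ∑ l ∈ Icc 1 j, x.1 l ≤ ∑ l ∈ Icc 1 j, m l) ∧
    ((∑ l ∈ Icc 1 (n - 2), x.1 l) + x.2.1 ≤ (∑ l ∈ Icc 1 (n - 2), m l) + m n) ∧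
    ((∑ l ∈ Icc 1 (n - 1), x.1 l) + x.2.2 (n - 1) ≤ ∑ l ∈ Icc 1 n, m l) ∧
    ((∑ l ∈ Icc 1 (n - 2), x.1 l) + x.2.1 + x.2.2 (n - 1) ≤ ∑ l ∈ Icc 1 n, m l) ∧
    (∀ d, 2 ≤ d → d ≤ n - 2 →
      (∑ l ∈ Icc 1 (n - 1), x.1 l) + ∑ l ∈ Icc d (n - 1), x.2.2 l ≤ QD n m d) ∧
    (∀ d, 2 ≤ d → d ≤ n - 2 →
      (∑ l ∈ Icc 1 (n - 2), x.1 l) + x.2.1 + ∑ l ∈ Icc d (n - 1), x.2.2 l ≤ QD n m d) ∧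
    (∀ d k, 2 ≤ d → d ≤ n - 1 → d - 1 ≤ k → k ≤ n - 2 →
      2 * (∑ l ∈ Icc 1 k, x.1 l) + (∑ l ∈ Icc (k + 1) (n - 1), x.1 l) + x.2.1 +
          ∑ l ∈ Icc d (n - 1), x.2.2 l ≤
        QD n m d + ∑ l ∈ Icc 1 k, m l)}

/-- Prefix sums. -/
def pre (a : ℕ → ℕ) (j : ℕ) : ℕ := ∑ l ∈ Icc 1 j, a l

lemma pre_zero (a : ℕ → ℕ) : pre a 0 = 0 := by simp [pre]

lemma pre_succ (a : ℕ → ℕ) (j : ℕ) : pre a (j + 1) = pre a j + a (j + 1) := by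
  unfold pre
  rw [Finset.sum_Icc_succ_top (by omega)]

lemma pre_mono (a : ℕ → ℕ) {i j : ℕ} (h : i ≤ j) : pre a i ≤ pre a j :=
  Finset.sum_le_sum_of_subset (Finset.Icc_subset_Icc_right h)

lemma pre_split (a : ℕ → ℕ) {i j : ℕ} (h : i ≤ j) :
    pre a i + ∑ l ∈ Icc (i + 1) j, a l = pre a j := by
  induction j, h using Nat.le_induction with
  | base => simp
  | succ j hj ih =>
    rw [Finset.sum_Icc_succ_top (by omega), pre_succ, ← ih]; ring

lemma sum_bot (d : ℕ → ℕ) {s t : ℕ} (h : s ≤ t) :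
    ∑ l ∈ Icc s t, d l = d s + ∑ l ∈ Icc (s + 1) t, d l := by
  rw [← Finset.add_sum_Ioc_eq_sum_Icc h]
  congr 1
  refine Finset.sum_congr ?_ fun _ _ => rfl
  ext l
  simp only [Finset.mem_Icc, Finset.mem_Ioc]
  omega

lemma QD_eq (r : ℕ) (m : ℕ → ℕ) (i : ℕ) (hi : i ≤ r) :
    QD (r + 2) m (i + 1) + pre m i = 2 * pre m r + m (r + 1) + m (r + 2) := by
  have := pre_split m hi
  have e1 : r + 2 - 2 = r := rfl
  have e2 : r + 2 - 1 = r + 1 := rfl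
  simp only [QD, e1, e2, Nat.add_sub_cancel]
  change pre m i + _ + _ + _ + _ = _
  omega

/-- The correction term. -/
def WD (r : ℕ) (E : ℕ → ℕ) (b c i : ℕ) : ℕ :=
  max (max b c) ((Icc i r).sup fun k => b + c - E k)

lemma WD_le_iff (r : ℕ) (E : ℕ → ℕ) (b c i t : ℕ) :
    WD r E b c i ≤ t ↔ b ≤ t ∧ c ≤ t ∧ ∀ k, i ≤ k → k ≤ r → b + c ≤ t + E k := by
  unfold WD
  simp only [max_le_iff, Finset.sup_le_iff, Finset.mem_Icc, and_imp, tsub_le_iff_right, and_assoc]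

lemma WD_cases (r : ℕ) (E : ℕ → ℕ) (b c i : ℕ) (h : i ≤ r) :
    WD r E b c i = b ∨ WD r E b c i = c ∨
      ∃ k, i ≤ k ∧ k ≤ r ∧ WD r E b c i + E k = b + c := by
  obtain ⟨k, hk, e⟩ := Finset.exists_mem_eq_sup (Icc i r) ⟨i, by simp [h]⟩ (fun k => b + c - E k)
  unfold WD
  rw [e]
  rw [Finset.mem_Icc] at hk
  by_cases h1 : max b c ≤ b + c - E k
  · by_cases h2 : b + c ≤ E k
    · left; omega
    · right; right; exact ⟨k, hk.1, hk.2, by omega⟩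
  · omega

lemma mem_SD_iff (r : ℕ) (hr : 2 ≤ r) (m : ℕ → ℕ) (a : ℕ → ℕ) (b : ℕ) (d : ℕ → ℕ) :
    (a, b, d) ∈ SD (r + 2) m ↔
      (∀ l, (l = 0 ∨ r + 1 < l) → a l = 0) ∧ (∀ l, (l ≤ 1 ∨ r + 1 < l) → d l = 0) ∧
      (∀ j, j ≤ r → pre a j ≤ pre m j) ∧
      a (r + 1) + pre a r ≤ pre m r + m (r + 1) ∧
      b + pre a r ≤ pre m r + m (r + 2) ∧
      ∀ i, 1 ≤ i → i ≤ r →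
        WD r (fun k => pre m k - pre a k) b (a (r + 1)) i + pre m i
          + ∑ l ∈ Icc (i + 1) (r + 1), d l
          + pre a r ≤ 2 * pre m r + m (r + 1) + m (r + 2) := by
  have e1 : r + 2 - 2 = r := rfl
  have e2 : r + 2 - 1 = r + 1 := rfl
  have e3 : ∀ (a : ℕ → ℕ) j, ∑ l ∈ Icc 1 j, a l = pre a j := fun _ _ => rfl
  simp only [SD, Set.mem_ofPred_eq, e1, e2, e3]
  have hpm1 := pre_succ m r
  have hpm2 := pre_succ m (r + 1)
  have hpa1 := pre_succ a r
  simp only [add_assoc, Nat.reduceAdd] at hpm2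
  constructor
  · rintro ⟨h1, h2, h3, h4, h5, h6, h7, h8, h9⟩
    have h3' : ∀ j, j ≤ r → pre a j ≤ pre m j := by
      intro j hj
      rcases Nat.eq_zero_or_pos j with rfl | hj0
      · simp [pre_zero]
      · exact h3 j hj0 (by omega)
    have h3r := h3 (r + 1) (by omega) le_rfl
    refine ⟨h1, h2, h3', by omega, by omega, ?_⟩
    intro i hi hir
    have hQ := QD_eq r m i hir
    have key : WD r (fun k => pre m k - pre a k) b (a (r + 1)) i ≤
        2 * pre m r + m (r + 1) + m (r + 2) - pre m i - (∑ l ∈ Icc (i + 1) (r + 1), d l)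
          - pre a r := by
      rw [WD_le_iff]
      have hb : pre a r + b + ∑ l ∈ Icc (i + 1) (r + 1), d l ≤ QD (r + 2) m (i + 1) := by
        rcases hir.lt_or_eq with hlt | rfl
        · exact h8 (i + 1) (by omega) (by omega)
        · simp only [Icc_self, sum_singleton]; omega
      have hc : pre a (r + 1) + ∑ l ∈ Icc (i + 1) (r + 1), d l ≤ QD (r + 2) m (i + 1) := by
        rcases hir.lt_or_eq with hlt | rfl
        · exact h7 (i + 1) (by omega) (by omega)
        · simp only [Icc_self, sum_singleton]; omega
      refine ⟨by omega, by omega, ?_⟩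
      intro k hk hkr
      have := h9 (i + 1) k (by omega) (by omega) (by omega) hkr
      have h10 := pre_split a (show k ≤ r + 1 by omega)
      have h11 := h3' k hkr
      omega
    have hb : pre a r + b + ∑ l ∈ Icc (i + 1) (r + 1), d l ≤ QD (r + 2) m (i + 1) := by
        rcases hir.lt_or_eq with hlt | rfl
        · exact h8 (i + 1) (by omega) (by omega)
        · simp only [Icc_self, sum_singleton]; omega
    omega
  · rintro ⟨h1, h2, h3, h4, h5, h6⟩
    have key : ∀ i, 1 ≤ i → i ≤ r →
       b + pre m i + ∑ l ∈ Icc (i + 1) (r + 1), d l + pre a r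
          ≤ 2 * pre m r + m (r + 1) + m (r + 2) ∧
       a (r + 1) + pre m i + ∑ l ∈ Icc (i + 1) (r + 1), d l + pre a r
          ≤ 2 * pre m r + m (r + 1) + m (r + 2) ∧
       ∀ k, i ≤ k → k ≤ r →
         b + a (r + 1) + pre m i + ∑ l ∈ Icc (i + 1) (r + 1), d l + pre a r + pre a k
          ≤ 2 * pre m r + m (r + 1) + m (r + 2) + pre m k := by
      intro i hi hir
      have hw := h6 i hi hir
      obtain ⟨w1, w2, w3⟩ := (WD_le_iff _ _ _ _ _ _).1
        (le_refl (WD r (fun k => pre m k - pre a k) b (a (r + 1)) i))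
      refine ⟨by omega, by omega, fun k hk hkr => ?_⟩
      have := w3 k hk hkr
      have := h3 k hkr
      omega
    have kr := key r (by omega) le_rfl
    simp only [Icc_self, sum_singleton] at kr
    refine ⟨h1, h2, ?_, by omega, by omega, by omega, ?_, ?_, ?_⟩
    · intro j hj hjr
      rcases Nat.lt_or_ge r j with h | h
      · obtain rfl : j = r + 1 := by omega
        omega
      · exact h3 j h
    · intro d' hd hdr
      obtain ⟨i, rfl⟩ : ∃ i, d' = i + 1 := ⟨d' - 1, by omega⟩
      have := key i (by omega) (by omega)
      have hQ := QD_eq r m i (by omega)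
      omega
    · intro d' hd hdr
      obtain ⟨i, rfl⟩ : ∃ i, d' = i + 1 := ⟨d' - 1, by omega⟩
      have := key i (by omega) (by omega)
      have hQ := QD_eq r m i (by omega)
      omega
    · intro d' k hd hdr hk hkr
      obtain ⟨i, rfl⟩ : ∃ i, d' = i + 1 := ⟨d' - 1, by omega⟩
      have := (key i (by omega) (by omega)).2.2 k (by omega) hkr
      have hQ := QD_eq r m i (by omega)
      have h10 := pre_split a (show k ≤ r + 1 by omega)
      omega

/-- Greedy splitting of a sequence with tail sums bounded by `U + V`. -/
lemma greedy (d U V : ℕ → ℕ) (t s : ℕ) (hs : s ≤ t + 1)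
    (hU : ∀ i, s ≤ i → i < t → U (i + 1) ≤ U i) (hV : ∀ i, s ≤ i → i < t → V (i + 1) ≤ V i)
    (hD : ∀ i, s ≤ i → i ≤ t → ∑ l ∈ Icc i t, d l ≤ U i + V i) :
    ∃ x y : ℕ → ℕ, (∀ l, x l + y l = d l) ∧
      ∀ i, s ≤ i → i ≤ t → ∑ l ∈ Icc i t, x l ≤ U i ∧ ∑ l ∈ Icc i t, y l ≤ V i := by
  induction hs using Nat.decreasingInduction with
  | self => exact ⟨d, 0, by simp, by intro i h1 h2; omega⟩
  | of_succ s hs ih =>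
    obtain ⟨x, y, hxy, H⟩ := ih (fun i h => hU i (by omega)) (fun i h => hV i (by omega))
      (fun i h => hD i (by omega))
    have hst : s ≤ t := by omega
    set X := ∑ l ∈ Icc (s + 1) t, x l with hX
    set Y := ∑ l ∈ Icc (s + 1) t, y l with hY
    have hXY : X + Y = ∑ l ∈ Icc (s + 1) t, d l := by
      rw [hX, hY, ← Finset.sum_add_distrib]; exact Finset.sum_congr rfl fun l _ => hxy l
    have hXU : X ≤ U s ∧ Y ≤ V s := by
      rcases hst.lt_or_eq with h | rfl
      · have := H (s + 1) le_rfl h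
        have := hU s le_rfl h
        have := hV s le_rfl h
        omega
      · simp [hX, hY]
    have hDs := hD s le_rfl hst
    rw [sum_bot d hst] at hDs
    have upd : ∀ (w : ℕ → ℕ) (v i : ℕ), s < i →
        ∑ l ∈ Icc i t, Function.update w s v l = ∑ l ∈ Icc i t, w l := by
      intro w v i hi
      refine Finset.sum_congr rfl fun l hl => ?_
      rw [Finset.mem_Icc] at hl
      exact Function.update_of_ne (by omega) _ _
    refine ⟨Function.update x s (min (d s) (U s - X)),
      Function.update y s (d s - min (d s) (U s - X)), ?_, ?_⟩
    · intro l
      by_cases h : l = s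
      · subst h; simp
      · simp [Function.update_of_ne h, hxy]
    · intro i hi hit
      rcases hi.lt_or_eq with h | rfl
      · rw [upd _ _ _ h, upd _ _ _ h]
        exact H i h hit
      · rw [sum_bot _ hst, sum_bot _ hst, upd _ _ _ (by omega), upd _ _ _ (by omega)]
        simp only [Function.update_self]
        omega

lemma WD_add (r : ℕ) (E F G : ℕ → ℕ) (f g : ℕ → ℕ) (hf : Monotone f) (hg : Monotone g)
    (hfg : ∀ e, f e + g e = e) (b c i : ℕ) (hi : i ≤ r)
    (hF : ∀ k, k ≤ r → F k = f (E k)) (hG : ∀ k, k ≤ r → G k = g (E k)) :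
    WD r F (f b) (f c) i + WD r G (g b) (g c) i ≤ WD r E b c i := by
  obtain ⟨w1, w2, w3⟩ := (WD_le_iff _ _ _ _ _ _).1 (le_refl (WD r E b c i))
  have hb := hfg b
  have hc := hfg c
  have bc : (f b ≤ f c ∧ g b ≤ g c) ∨ (f c ≤ f b ∧ g c ≤ g b) := by
    rcases le_total b c with h | h
    · exact Or.inl ⟨hf h, hg h⟩
    · exact Or.inr ⟨hf h, hg h⟩
  have tot : ∀ x y, (x ≤ y ∧ f x ≤ f y ∧ g x ≤ g y) ∨ (y ≤ x ∧ f y ≤ f x ∧ g y ≤ g x) := by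
    intro x y
    rcases le_total x y with h | h
    · exact Or.inl ⟨h, hf h, hg h⟩
    · exact Or.inr ⟨h, hf h, hg h⟩
  rcases WD_cases r F (f b) (f c) i hi with h | h | ⟨k, k1, k2, h⟩ <;>
  rcases WD_cases r G (g b) (g c) i hi with h' | h' | ⟨l, l1, l2, h'⟩
  · omega
  · omega
  · rw [hG l l2] at h'
    have := w3 l l1 l2
    have := hfg (E l)
    have := tot c (E l)
    omega
  · omega
  · omega
  · rw [hG l l2] at h'
    have := w3 l l1 l2
    have := hfg (E l)
    have := tot b (E l)
    omega
  · rw [hF k k2] at h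
    have := w3 k k1 k2
    have := hfg (E k)
    have := tot c (E k)
    omega
  · rw [hF k k2] at h
    have := w3 k k1 k2
    have := hfg (E k)
    have := tot b (E k)
    omega
  · rw [hG l l2] at h'
    rw [hF k k2] at h
    have := w3 k k1 k2
    have := w3 l l1 l2
    have := hfg (E k)
    have := hfg (E l)
    have := tot (E k) (E l)
    omega

/-- Upper bounds for the tail sums are nonnegative and monotone. -/
lemma WD_bounds (r : ℕ) (m E : ℕ → ℕ) (b c : ℕ)
    (hE : ∀ j, j < r → E (j + 1) ≤ E j + m (j + 1))
    (hc : c ≤ E r + m (r + 1)) (hb : b ≤ E r + m (r + 2)) :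
    (∀ i, i ≤ r → WD r E b c i + pre m i ≤ pre m r + m (r + 1) + m (r + 2) + E r) ∧
    (∀ i, i < r → WD r E b c i + pre m i ≤ WD r E b c (i + 1) + pre m (i + 1)) := by
  have hE' : ∀ k, k ≤ r → E r + pre m k ≤ E k + pre m r := by
    intro k hk
    induction hk using Nat.decreasingInduction with
    | self => omega
    | of_succ k hk ih =>
      have := hE k hk
      have := pre_succ m k
      omega
  constructor
  · intro i hi
    have h0 := pre_mono m hi
    have : WD r E b c i ≤ pre m r + m (r + 1) + m (r + 2) + E r - pre m i := by
      rw [WD_le_iff]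
      refine ⟨by omega, by omega, fun k hk hkr => ?_⟩
      have := hE' k hkr
      have := pre_mono m hk
      omega
    omega
  · intro i hi
    have h0 := pre_succ m i
    obtain ⟨w1, w2, w3⟩ := (WD_le_iff _ _ _ _ _ _).1 (le_refl (WD r E b c (i + 1)))
    have : WD r E b c i ≤ WD r E b c (i + 1) + m (i + 1) := by
      rw [WD_le_iff]
      refine ⟨by omega, by omega, fun k hk hkr => ?_⟩
      rcases hk.lt_or_eq with h | rfl
      · have := w3 k h hkr
        omega
      · have := w3 (i + 1) le_rfl hi
        have := hE i hi
        omega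
    omega

lemma WD_congr (r : ℕ) (E F : ℕ → ℕ) (b c i : ℕ) (h : ∀ k, k ≤ r → E k = F k) :
    WD r E b c i = WD r F b c i := by
  unfold WD
  congr 1
  refine Finset.sup_congr rfl fun k hk => ?_
  rw [Finset.mem_Icc] at hk
  rw [h k hk.2]

lemma pre_smul (k : ℕ) (m : ℕ → ℕ) (j : ℕ) : pre (k • m) j = k * pre m j := by
  simp [pre, Finset.mul_sum]

lemma SD_split (r k : ℕ) (hr : 2 ≤ r) (m : ℕ → ℕ) (a : ℕ → ℕ) (b : ℕ) (d : ℕ → ℕ)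
    (hz : (a, b, d) ∈ SD (r + 2) ((k + 1) • m)) :
    ∃ x ∈ SD (r + 2) m, ∃ y ∈ SD (r + 2) (k • m), (a, b, d) = x + y := by
  obtain ⟨f, g, hf, hg, hfg, hfs, hgs⟩ : ∃ f g : ℕ → ℕ, Monotone f ∧ Monotone g ∧
      (∀ e, f e + g e = e) ∧ (∀ e p, f (e + (k + 1) * p) = f e + p) ∧
      (∀ e p, g (e + (k + 1) * p) = g e + k * p) := by
    have key : ∀ e p, (e + (k + 1) * p) / (k + 1) = e / (k + 1) + p := fun e p =>
      Nat.add_mul_div_left _ _ (Nat.succ_pos k)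
    refine ⟨fun e => e / (k + 1), fun e => e - e / (k + 1), ?_, ?_, ?_, key, ?_⟩
    · intro x y h; exact Nat.div_le_div_right h
    · refine monotone_nat_of_le_succ fun e => ?_
      have h1 : (e + 1) / (k + 1) ≤ e / (k + 1) + 1 := by
        rw [← Nat.add_div_right e (Nat.succ_pos k)]
        exact Nat.div_le_div_right (by omega)
      change e - e / (k + 1) ≤ e + 1 - (e + 1) / (k + 1)
      omega
    · intro e
      have := Nat.div_le_self e (k + 1)
      simp only
      omega
    · intro e p
      have h := key e p
      have := Nat.div_le_self e (k + 1)
      simp only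
      rw [h, Nat.add_mul, one_mul]
      omega
  have hfl : ∀ e e' p, e ≤ e' + (k + 1) * p → f e ≤ f e' + p := fun e e' p h => by
    rw [← hfs]; exact hf h
  have hgl : ∀ e e' p, e ≤ e' + (k + 1) * p → g e ≤ g e' + k * p := fun e e' p h => by
    rw [← hgs]; exact hg h
  rw [mem_SD_iff r hr] at hz
  obtain ⟨h1, h2, h3, h4, h5, h6⟩ := hz
  set c := a (r + 1) with hc
  set E : ℕ → ℕ := fun j => pre ((k + 1) • m) j - pre a j with hE
  have hEa : ∀ j, j ≤ r → E j + pre a j = (k + 1) * pre m j := by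
    intro j hj
    have := h3 j hj
    rw [← pre_smul]
    simp only [hE]; omega
  have hEstep : ∀ j, j < r → E (j + 1) + a (j + 1) = E j + (k + 1) * m (j + 1) := by
    intro j hj
    have t1 := hEa j (by omega)
    have t2 := hEa (j + 1) (by omega)
    rw [pre_succ, pre_succ, mul_add] at t2
    omega
  have hfE : ∀ j, j < r → f (E (j + 1)) ≤ f (E j) + m (j + 1) := fun j hj =>
    hfl _ _ _ (by have := hEstep j hj; omega)
  have hgE : ∀ j, j < r → g (E (j + 1)) ≤ g (E j) + k * m (j + 1) := fun j hj =>
    hgl _ _ _ (by have := hEstep j hj; omega)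
  have hEr := hEa r le_rfl
  simp only [Pi.smul_apply, smul_eq_mul, pre_smul] at h4 h5 h6
  have hcE : c ≤ E r + (k + 1) * m (r + 1) := by omega
  have hbE : b ≤ E r + (k + 1) * m (r + 2) := by omega
  -- the `a` parts
  obtain ⟨ax, ay, haxy, hax, hay, hcx, hcy⟩ : ∃ ax ay : ℕ → ℕ, (∀ l, ax l + ay l = a l) ∧
      (∀ j, j ≤ r → f (E j) + pre ax j = pre m j) ∧
      (∀ j, j ≤ r → g (E j) + pre ay j = k * pre m j) ∧ ax (r + 1) = f c ∧ ay (r + 1) = g c := by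
    let ax : ℕ → ℕ := fun l => if l = r + 1 then f c else
      if 1 ≤ l ∧ l ≤ r then m l + f (E (l - 1)) - f (E l) else 0
    have hle : ∀ l, ax l ≤ a l := by
      intro l
      simp only [ax]
      split_ifs with u v
      · subst u; have := hfg c; omega
      · obtain ⟨j, rfl⟩ : ∃ j, l = j + 1 := ⟨l - 1, by omega⟩
        have t1 := hgE j (by omega)
        have t2 := hEstep j (by omega)
        have t3 := hfg (E j)
        have t4 := hfg (E (j + 1))
        rw [Nat.add_mul, one_mul] at t2
        simp only [Nat.add_sub_cancel]
        omega
      · omega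
    have E0 : E 0 = 0 := by
      have := hEa 0 (by omega)
      simp only [pre_zero] at this
      omega
    have hpx : ∀ j, j ≤ r → f (E j) + pre ax j = pre m j := by
      intro j
      induction j with
      | zero => intro _; simp only [pre_zero, E0]; have := hfg 0; omega
      | succ j ih =>
        intro hj
        have := ih (by omega)
        have t1 := hfE j (by omega)
        rw [pre_succ, pre_succ]
        have : ax (j + 1) = m (j + 1) + f (E j) - f (E (j + 1)) := by
          simp only [ax]
          rw [if_neg (by omega), if_pos (by omega)]; rfl
        omega
    have hadd : ∀ j, pre ax j + pre (fun l => a l - ax l) j = pre a j := by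
      intro j
      unfold pre
      rw [← Finset.sum_add_distrib]
      exact Finset.sum_congr rfl fun l _ => by have := hle l; omega
    refine ⟨ax, fun l => a l - ax l, fun l => by have := hle l; simp only; omega, hpx, ?_, ?_, ?_⟩
    · intro j hj
      have t1 := hpx j hj
      have t2 := hadd j
      have t3 := hEa j hj
      have t4 := hfg (E j)
      rw [Nat.add_mul, one_mul] at t3
      omega
    · simp [ax]
    · have := hfg c
      simp only [ax, if_true]; omega
  have bx := WD_bounds r m (fun j => f (E j)) (f b) (f c) hfE (hfl _ _ _ hcE) (hfl _ _ _ hbE)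
  have byy := WD_bounds r (k • m) (fun j => g (E j)) (g b) (g c) hgE (hgl _ _ _ hcE) (hgl _ _ _ hbE)
  simp only [Pi.smul_apply, smul_eq_mul, pre_smul] at byy
  have hfgr := hfg (E r)
  obtain ⟨dx, dy, hdxy, hd⟩ := greedy d
    (fun i => pre m r + m (r + 1) + m (r + 2) + f (E r)
      - (WD r (fun j => f (E j)) (f b) (f c) (i - 1) + pre m (i - 1)))
    (fun i => k * pre m r + k * m (r + 1) + k * m (r + 2) + g (E r)
      - (WD r (fun j => g (E j)) (g b) (g c) (i - 1) + k * pre m (i - 1))) (r + 1) 2 (by omega)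
    (by
      intro i hi hir
      obtain ⟨j, rfl⟩ : ∃ j, i = j + 1 := ⟨i - 1, by omega⟩
      have := bx.2 j (by omega)
      simp only [Nat.add_sub_cancel]
      omega)
    (by
      intro i hi hir
      obtain ⟨j, rfl⟩ : ∃ j, i = j + 1 := ⟨i - 1, by omega⟩
      have := byy.2 j (by omega)
      simp only [Nat.add_sub_cancel]
      omega)
    (by
      intro i hi hir
      obtain ⟨j, rfl⟩ : ∃ j, i = j + 1 := ⟨i - 1, by omega⟩
      have t1 := bx.1 j (by omega)
      have t2 := byy.1 j (by omega)
      have t3 := h6 j (by omega) (by omega)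
      have t4 := WD_add r E (fun j => f (E j)) (fun j => g (E j)) f g hf hg hfg b c j (by omega)
        (fun _ _ => rfl) (fun _ _ => rfl)
      simp only [Nat.add_sub_cancel]
      simp only [Nat.add_mul, one_mul] at t3 hEr
      omega)
  refine ⟨(ax, f b, dx), ?_, (ay, g b, dy), ?_, ?_⟩
  · rw [mem_SD_iff r hr]
    have hr' := hax r le_rfl
    refine ⟨fun l hl => ?_, fun l hl => ?_, fun j hj => ?_, ?_, ?_, ?_⟩
    · have := h1 l hl; have := haxy l; omega
    · have := h2 l hl; have := hdxy l; omega
    · have := hax j hj; omega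
    · have := hfl _ _ _ hcE; omega
    · have := hfl _ _ _ hbE; omega
    · intro i hi hir
      have t1 := (hd (i + 1) (by omega) (by omega)).1
      have t2 := bx.1 i hir
      simp only [Nat.add_sub_cancel] at t1
      rw [hcx, WD_congr r _ (fun j => f (E j)) _ _ _
        (fun j hj => by have := hax j hj; omega)]
      omega
  · rw [mem_SD_iff r hr]
    have hr' := hay r le_rfl
    simp only [Pi.smul_apply, smul_eq_mul, pre_smul]
    refine ⟨fun l hl => ?_, fun l hl => ?_, fun j hj => ?_, ?_, ?_, ?_⟩
    · have := h1 l hl; have := haxy l; omega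
    · have := h2 l hl; have := hdxy l; omega
    · have := hay j hj; omega
    · have := hgl _ _ _ hcE; omega
    · have := hgl _ _ _ hbE; omega
    · intro i hi hir
      have t1 := (hd (i + 1) (by omega) (by omega)).2
      have t2 := byy.1 i hir
      simp only [Nat.add_sub_cancel] at t1
      rw [hcy, WD_congr r _ (fun j => g (E j)) _ _ _
        (fun j hj => by have := hay j hj; omega)]
      omega
  · refine Prod.ext (funext fun l => (haxy l).symm) (Prod.ext (hfg b).symm
      (funext fun l => (hdxy l).symm))

lemma QD_add (n : ℕ) (m m' : ℕ → ℕ) (d : ℕ) : QD n (m + m') d = QD n m d + QD n m' d := by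
  simp only [QD, Pi.add_apply, Finset.sum_add_distrib]
  ring

lemma SD_add (n : ℕ) (m m' : ℕ → ℕ) (x y : (ℕ → ℕ) × ℕ × (ℕ → ℕ)) (hx : x ∈ SD n m)
    (hy : y ∈ SD n m') : x + y ∈ SD n (m + m') := by
  obtain ⟨h1, h2, h3, h4, h5, h6, h7, h8, h9⟩ := hx
  obtain ⟨k1, k2, k3, k4, k5, k6, k7, k8, k9⟩ := hy
  simp only [SD, Set.mem_ofPred_eq, Prod.fst_add, Prod.snd_add, Pi.add_apply,
    Finset.sum_add_distrib, QD_add]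
  refine ⟨fun l hl => ?_, fun l hl => ?_, fun j hj hj' => ?_, by omega, by omega, by omega,
    fun d u v => ?_, fun d u v => ?_, fun d k u v w w' => ?_⟩
  · rw [h1 l hl, k1 l hl]
  · rw [h2 l hl, k2 l hl]
  · exact add_le_add (h3 j hj hj') (k3 j hj hj')
  · have := h7 d u v
    have := k7 d u v
    omega
  · have := h8 d u v
    have := k8 d u v
    omega
  · have := h9 d k u v w w'
    have := k9 d k u v w w'
    omega

/-- Normality of the polytope in type `D`: `S_D(k·m)` is the `k`-fold Minkowski sum of
`S_D(m)` with itself. -/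
theorem SD_normal (n k : ℕ) (hn : 4 ≤ n) (hk : 1 ≤ k) (m : ℕ → ℕ)
    (z : (ℕ → ℕ) × ℕ × (ℕ → ℕ)) :
    z ∈ SD n (k • m) ↔
      ∃ x : Fin k → (ℕ → ℕ) × ℕ × (ℕ → ℕ), (∀ t, x t ∈ SD n m) ∧ z = ∑ t, x t := by
  obtain ⟨r, rfl⟩ : ∃ r, n = r + 2 := ⟨n - 2, by omega⟩
  have hr : 2 ≤ r := by omega
  induction k, hk using Nat.le_induction generalizing z with
  | base =>
    rw [one_smul]
    constructor
    · intro h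
      exact ⟨fun _ => z, fun _ => h, by simp⟩
    · rintro ⟨x, hx, rfl⟩
      simpa using hx 0
  | succ k hk ih =>
    constructor
    · intro h
      obtain ⟨x, hx, y, hy, e⟩ := SD_split r k hr m z.1 z.2.1 z.2.2 h
      obtain ⟨w, hw, rfl⟩ := (ih y).1 hy
      refine ⟨Fin.cons x w, ?_, ?_⟩
      · intro t
        refine Fin.cases ?_ (fun t => ?_) t
        · simpa using hx
        · simpa using hw t
      · rw [Fin.sum_univ_succ]
        simpa using e
    · rintro ⟨x, hx, rfl⟩
      rw [Fin.sum_univ_succ, add_smul, one_smul, add_comm (k • m)]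
      exact SD_add _ _ _ _ _ (hx 0) ((ih _).2 ⟨fun t => x t.succ, fun t => hx _, rfl⟩)
end

section
/- Let 1 ≤ i ≤ n and let e_i ∈ ℕ^n be the i-th standard unit vector. Denote by u(l) the tuple in ℕ^{2n−1} with a 1 in coordinate c_l and 0 elsewhere. Then all of the following belong to S_C(e_i): u(j) for all i ≤ j ≤ n; u(2n−j) for all 1 ≤ j ≤ n−1 (these are the coordinates of the barred roots α_{1,j̄}); u(j) + u(2n−j') for all i ≤ j ≤ n and all 2 ≤ j' ≤ i; and u(2n−j) + u(2n−j') for all 2 ≤ j ≤ j' ≤ i. (This is the paper's Lemma on the fundamental sets S_w(ω_i) in type C.) -/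
open Finset
open scoped Pointwise

/-- The `i`-th standard unit vector (1-based coordinates, as a function `ℕ → ℕ`). -/
def unitVec (i : ℕ) : ℕ → ℕ := fun l => if l = i then 1 else 0

theorem sum_unitVec (a b i : ℕ) :
    ∑ l ∈ Icc a b, unitVec i l = if a ≤ i ∧ i ≤ b then 1 else 0 := by
  simp [unitVec, Finset.sum_ite_eq', Finset.mem_Icc]

set_option maxHeartbeats 4000000 in
/-- Points of the fundamental set `S_C(e_i)` in type `C`: the unit vectors `u(j)` for
`i ≤ j ≤ n`, the unit vectors `u(2n-j)` (barred coordinates) for `1 ≤ j ≤ n-1`, and the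
sums `u(j) + u(2n-j')` for `i ≤ j ≤ n`, `2 ≤ j' ≤ i`, and `u(2n-j) + u(2n-j')` for
`2 ≤ j ≤ j' ≤ i`. -/
theorem SC_fundamental_points (n i : ℕ) (hn : 2 ≤ n) (hi1 : 1 ≤ i) (hin : i ≤ n) :
    (∀ j, i ≤ j → j ≤ n → unitVec j ∈ SC n (unitVec i)) ∧
    (∀ j, 1 ≤ j → j < n → unitVec (2 * n - j) ∈ SC n (unitVec i)) ∧
    (∀ j j', i ≤ j → j ≤ n → 2 ≤ j' → j' ≤ i →
      unitVec j + unitVec (2 * n - j') ∈ SC n (unitVec i)) ∧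
    (∀ j j', 2 ≤ j → j ≤ j' → j' ≤ i →
      unitVec (2 * n - j) + unitVec (2 * n - j') ∈ SC n (unitVec i)) := by
  refine ⟨?_, ?_, ?_, ?_⟩
  all_goals
    intros
    simp only [SC, Set.mem_ofPred_eq, Pi.add_apply, Finset.sum_add_distrib, sum_unitVec]
    simp only [unitVec]
    refine ⟨?_, ?_, ?_, ?_, ?_⟩
    all_goals
      intros
      split_ifs <;> omega
end

section
/- Let 1 ≤ i ≤ n, let e_i ∈ ℕ^n be the i-th standard unit vector, and denote by u(a_j), u(b), u(d_j) the tuples in ℕ^{2n−2} with a single 1 in the indicated coordinate and 0 elsewhere. Then the following tuples belong to S_D(e_i): (1) if i = 1: u(a_j) for all 1 ≤ j ≤ n−1, u(b), u(d_j) for all 2 ≤ j ≤ n−1, and u(a_{n−1}) + u(b); (2) if 2 ≤ i ≤ n−2: u(a_j) for all i ≤ j ≤ n−1, u(b), u(d_j) for all 2 ≤ j ≤ n−1, u(a_{n−1}) + u(b), u(a_j) + u(d_{j'}) for all i ≤ j ≤ n−1 and 2 ≤ j' ≤ i, and u(d_j) + u(d_{j'}) for all 2 ≤ j, j' ≤ i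 with j ≠ j'; (3) if i = n−1: u(a_{n−1}) and u(d_j) for all 2 ≤ j ≤ n−1; (4) if i = n: u(b) and u(d_j) for all 2 ≤ j ≤ n−1. (This is the paper's Lemma on the fundamental sets S_w(ω_i) in type D.) -/
open Finset
open scoped Pointwise

theorem sum_unitVec_Icc (i p q : ℕ) :
    ∑ l ∈ Icc p q, unitVec i l = if p ≤ i ∧ i ≤ q then 1 else 0 := by
  simp [unitVec]

/-- Points of the fundamental set `S_D(e_i)` in type `D`, following the paper's Lemma:
the cases `i = 1`, `2 ≤ i ≤ n-2`, `i = n-1` and `i = n`.  Here `u(a_j) = (e_j, 0, 0)`,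
`u(b) = (0, 1, 0)` and `u(d_j) = (0, 0, e_j)`. -/
theorem SD_fundamental_points (n i : ℕ) (hn : 4 ≤ n) (hi1 : 1 ≤ i) (hin : i ≤ n) :
    (i = 1 →
      (∀ j, 1 ≤ j → j ≤ n - 1 →
        ((unitVec j, 0, 0) : (ℕ → ℕ) × ℕ × (ℕ → ℕ)) ∈ SD n (unitVec i)) ∧
      ((0, 1, 0) : (ℕ → ℕ) × ℕ × (ℕ → ℕ)) ∈ SD n (unitVec i) ∧
      (∀ j, 2 ≤ j → j ≤ n - 1 →
        ((0, 0, unitVec j) : (ℕ → ℕ) × ℕ × (ℕ → ℕ)) ∈ SD n (unitVec i)) ∧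
      ((unitVec (n - 1), 1, 0) : (ℕ → ℕ) × ℕ × (ℕ → ℕ)) ∈ SD n (unitVec i)) ∧
    (2 ≤ i → i ≤ n - 2 →
      (∀ j, i ≤ j → j ≤ n - 1 →
        ((unitVec j, 0, 0) : (ℕ → ℕ) × ℕ × (ℕ → ℕ)) ∈ SD n (unitVec i)) ∧
      ((0, 1, 0) : (ℕ → ℕ) × ℕ × (ℕ → ℕ)) ∈ SD n (unitVec i) ∧
      (∀ j, 2 ≤ j → j ≤ n - 1 →
        ((0, 0, unitVec j) : (ℕ → ℕ) × ℕ × (ℕ → ℕ)) ∈ SD n (unitVec i)) ∧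
      ((unitVec (n - 1), 1, 0) : (ℕ → ℕ) × ℕ × (ℕ → ℕ)) ∈ SD n (unitVec i) ∧
      (∀ j j', i ≤ j → j ≤ n - 1 → 2 ≤ j' → j' ≤ i →
        ((unitVec j, 0, unitVec j') : (ℕ → ℕ) × ℕ × (ℕ → ℕ)) ∈ SD n (unitVec i)) ∧
      (∀ j j', 2 ≤ j → j ≤ i → 2 ≤ j' → j' ≤ i → j ≠ j' →
        ((0, 0, unitVec j + unitVec j') : (ℕ → ℕ) × ℕ × (ℕ → ℕ)) ∈ SD n (unitVec i))) ∧
    (i = n - 1 →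
      ((unitVec (n - 1), 0, 0) : (ℕ → ℕ) × ℕ × (ℕ → ℕ)) ∈ SD n (unitVec i) ∧
      (∀ j, 2 ≤ j → j ≤ n - 1 →
        ((0, 0, unitVec j) : (ℕ → ℕ) × ℕ × (ℕ → ℕ)) ∈ SD n (unitVec i))) ∧
    (i = n →
      ((0, 1, 0) : (ℕ → ℕ) × ℕ × (ℕ → ℕ)) ∈ SD n (unitVec i) ∧
      (∀ j, 2 ≤ j → j ≤ n - 1 →
        ((0, 0, unitVec j) : (ℕ → ℕ) × ℕ × (ℕ → ℕ)) ∈ SD n (unitVec i))) := by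
  simp only [SD, QD, Set.mem_ofPred_eq, sum_unitVec_Icc, Pi.zero_apply, Pi.add_apply,
    Finset.sum_add_distrib, Finset.sum_const_zero]
  simp only [unitVec]
  refine ⟨?_, ?_, ?_, ?_⟩
  · intro h
    refine ⟨?_, ?_, ?_, ?_⟩ <;> intros <;>
      refine ⟨?_, ?_, ?_, ?_, ?_, ?_, ?_, ?_, ?_⟩ <;> intros <;> grind
  · intro h h'
    refine ⟨?_, ?_, ?_, ?_, ?_, ?_⟩ <;> intros <;>
      refine ⟨?_, ?_, ?_, ?_, ?_, ?_, ?_, ?_, ?_⟩ <;> intros <;> grind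
  · intro h
    refine ⟨?_, ?_⟩ <;> intros <;>
      refine ⟨?_, ?_, ?_, ?_, ?_, ?_, ?_, ?_, ?_⟩ <;> intros <;> grind
  · intro h
    refine ⟨?_, ?_⟩ <;> intros <;>
      refine ⟨?_, ?_, ?_, ?_, ?_, ?_, ?_, ?_, ?_⟩ <;> intros <;> grind
end

section
/- For all m, m' ∈ ℕ^n one has the Minkowski sum identity S'_C(m + m') = S'_C(m) + S'_C(m'): every element of S'_C(m + m') can be written as x + y with x ∈ S'_C(m) and y ∈ S'_C(m'), and conversely every such sum lies in S'_C(m + m'). (This is the paper's assertion that the polytope defined by the Dyck-path and degree-path inequalities alone, omitting the inequalities with coefficients, still has the Minkowski property, in type C.) -/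
open Finset
open scoped Pointwise

/-- The lattice-point set `S'_C(m)` given by only the Dyck-path inequalities (C1)–(C2)
and the degree-path inequalities (C3) in type `C_n` (the inequalities from paths with
coefficients are omitted). -/
def SC' (n : ℕ) (m : ℕ → ℕ) : Set (ℕ → ℕ) :=
  {c | (∀ l, (l = 0 ∨ 2 * n - 1 < l) → c l = 0) ∧
    (∀ j, 1 ≤ j → j < n →
      ∑ l ∈ Icc 1 j, c l ≤ ∑ l ∈ Icc 1 j, m l) ∧
    ((∑ l ∈ Icc 1 (n - 1), c l) + c (2 * n - 1) ≤ ∑ l ∈ Icc 1 n, m l) ∧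
    (∀ j, 2 ≤ j → j ≤ n →
      (∑ l ∈ Icc 1 (2 * n - j), c l) + c (2 * n - 1) ≤
        (∑ l ∈ Icc 1 (j - 1), m l) + 2 * ∑ l ∈ Icc j n, m l)}

/-- Running maximum of the excess of the partial sums of `c` over those of `d`. -/
def runY (c d : ℕ → ℕ) : ℕ → ℕ
  | 0 => 0
  | k + 1 => max (runY c d k) (∑ i ∈ range (k + 1), c i - ∑ i ∈ range (k + 1), d i)

theorem runY_ge (c d : ℕ → ℕ) (k : ℕ) :
    ∑ i ∈ range k, c i ≤ runY c d k + ∑ i ∈ range k, d i := by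
  cases k with
  | zero => simp
  | succ k => simp only [runY]; omega

theorem partial_split (N : ℕ) (c d d' : ℕ → ℕ)
    (h : ∀ k ≤ N, ∑ i ∈ range k, c i ≤ ∑ i ∈ range k, d i + ∑ i ∈ range k, d' i) :
    ∃ x y : ℕ → ℕ, (∀ i, x i + y i = c i) ∧
      (∀ k ≤ N, ∑ i ∈ range k, x i ≤ ∑ i ∈ range k, d i) ∧
      (∀ k ≤ N, ∑ i ∈ range k, y i ≤ ∑ i ∈ range k, d' i) := by
  have hmono : ∀ k, runY c d k ≤ runY c d (k + 1) := fun k => le_max_left _ _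
  have hinc : ∀ k, runY c d (k + 1) ≤ runY c d k + c k := by
    intro k
    have := runY_ge c d k
    simp only [runY, sum_range_succ]
    omega
  have hle : ∀ k ≤ N, runY c d k ≤ ∑ i ∈ range k, d' i := by
    intro k
    induction k with
    | zero => intro _; simp [runY]
    | succ k ih =>
      intro hk
      have h1 := ih (by omega)
      have h2 := h (k + 1) hk
      simp only [runY, sum_range_succ] at h2 ⊢
      omega
  have hy : ∀ k, ∑ i ∈ range k, (runY c d (i + 1) - runY c d i) = runY c d k := by
    intro k
    induction k with
    | zero => simp [runY]
    | succ k ih => rw [sum_range_succ, ih]; have := hmono k; omega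
  have hxy : ∀ i, (c i - (runY c d (i + 1) - runY c d i)) + (runY c d (i + 1) - runY c d i)
      = c i := by
    intro i; have := hinc i; omega
  refine ⟨fun i => c i - (runY c d (i + 1) - runY c d i),
    fun i => runY c d (i + 1) - runY c d i, hxy, ?_, ?_⟩
  · intro k _
    have h1 : ∑ i ∈ range k, (c i - (runY c d (i + 1) - runY c d i)) +
        ∑ i ∈ range k, (runY c d (i + 1) - runY c d i) = ∑ i ∈ range k, c i := by
      rw [← sum_add_distrib]
      exact sum_congr rfl fun i _ => hxy i
    rw [hy] at h1
    have := runY_ge c d k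
    simp only
    omega
  · intro k hk
    simp only
    rw [hy]
    exact hle k hk

/-- Reordering of the coordinates: `1, …, n-1, 2n-1, n, …, 2n-2`. -/
def sg (n i : ℕ) : ℕ := if i + 1 < n then i + 1 else if i + 1 = n then 2 * n - 1 else i

/-- Inverse of the reordering. -/
def tu (n l : ℕ) : ℕ := if l < n then l - 1 else if l = 2 * n - 1 then n - 1 else l

/-- Increments of the bounds. -/
def dd (n : ℕ) (m : ℕ → ℕ) (i : ℕ) : ℕ := if i < n then m (i + 1) else m (2 * n - i)

theorem sg_low (n : ℕ) (c : ℕ → ℕ) (k : ℕ) (hk : k < n) :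
    ∑ i ∈ range k, c (sg n i) = ∑ l ∈ Icc 1 k, c l := by
  induction k with
  | zero => simp
  | succ k ih =>
    rw [sum_range_succ, ih (by omega), sum_Icc_succ_top (by omega)]
    simp [sg, hk]

theorem sg_high (n : ℕ) (hn : 2 ≤ n) (c : ℕ → ℕ) (k : ℕ) (hk : n ≤ k + 1) :
    ∑ i ∈ range (k + 1), c (sg n i) = ∑ l ∈ Icc 1 k, c l + c (2 * n - 1) := by
  induction k with
  | zero => omega
  | succ k ih =>
    rw [sum_range_succ]
    by_cases h : n ≤ k + 1
    · rw [ih h, sum_Icc_succ_top (by omega)]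
      have : sg n (k + 1) = k + 1 := by unfold sg; split_ifs <;> omega
      rw [this]; omega
    · rw [sg_low n c (k + 1) (by omega)]
      have : sg n (k + 1) = 2 * n - 1 := by unfold sg; split_ifs <;> omega
      rw [this]

theorem dd_low (n : ℕ) (m : ℕ → ℕ) (k : ℕ) (hk : k ≤ n) :
    ∑ i ∈ range k, dd n m i = ∑ l ∈ Icc 1 k, m l := by
  induction k with
  | zero => simp
  | succ k ih =>
    rw [sum_range_succ, ih (by omega), sum_Icc_succ_top (by omega)]
    have : k < n := by omega
    simp [dd, this]

theorem dd_high (n : ℕ) (m : ℕ → ℕ) (t : ℕ) (ht : t < n) :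
    ∑ i ∈ range (n + t), dd n m i =
      ∑ l ∈ Icc 1 (n - t), m l + 2 * ∑ l ∈ Icc (n - t + 1) n, m l := by
  induction t with
  | zero => simp [dd_low]
  | succ t ih =>
    rw [← add_assoc, sum_range_succ, ih (by omega)]
    obtain ⟨s, hs⟩ : ∃ s, n - t = s + 1 := ⟨n - t - 1, by omega⟩
    have h1 : n - (t + 1) = s := by omega
    have h2 : dd n m (n + t) = m (s + 1) := by
      unfold dd
      rw [if_neg (by omega)]
      congr 1; omega
    have h3 : ∑ l ∈ Icc (s + 1) n, m l = m (s + 1) + ∑ l ∈ Icc (s + 1 + 1) n, m l := by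
      rw [← add_sum_Ioc_eq_sum_Icc (by omega)]
      congr 2; ext l; simp only [mem_Ioc, mem_Icc]; omega
    rw [h1, hs, h2, h3, sum_Icc_succ_top (by omega)]
    omega

theorem mem_SC'_iff (n : ℕ) (hn : 2 ≤ n) (m c : ℕ → ℕ) :
    c ∈ SC' n m ↔ (∀ l, (l = 0 ∨ 2 * n - 1 < l) → c l = 0) ∧
      ∀ k ≤ 2 * n - 1, ∑ i ∈ range k, c (sg n i) ≤ ∑ i ∈ range k, dd n m i := by
  have hN : ∑ i ∈ range n, c (sg n i) = ∑ l ∈ Icc 1 (n - 1), c l + c (2 * n - 1) := by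
    have := sg_high n hn c (n - 1) (by omega)
    rwa [show n - 1 + 1 = n by omega] at this
  have hj : ∀ j, 2 ≤ j → j ≤ n →
      ∑ i ∈ range (2 * n - j + 1), c (sg n i) =
        ∑ l ∈ Icc 1 (2 * n - j), c l + c (2 * n - 1) ∧
      ∑ i ∈ range (2 * n - j + 1), dd n m i =
        (∑ l ∈ Icc 1 (j - 1), m l) + 2 * ∑ l ∈ Icc j n, m l := by
    intro j h2 hjn
    refine ⟨sg_high n hn c _ (by omega), ?_⟩
    have := dd_high n m (n - j + 1) (by omega)
    rwa [show n + (n - j + 1) = 2 * n - j + 1 by omega,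
      show n - (n - j + 1) = j - 1 by omega, show j - 1 + 1 = j by omega] at this
  constructor
  · rintro ⟨h0, h1, h2, h3⟩
    refine ⟨h0, fun k hk => ?_⟩
    rcases lt_trichotomy k n with h | h | h
    · rcases Nat.eq_zero_or_pos k with rfl | hp
      · simp
      · rw [sg_low n c k h, dd_low n m k h.le]
        exact h1 k hp h
    · subst h
      rw [hN, dd_low _ m _ le_rfl]
      exact h2
    · obtain ⟨e1, e2⟩ := hj (2 * n - k + 1) (by omega) (by omega)
      have h4 := h3 (2 * n - k + 1) (by omega) (by omega)
      rw [← e1, ← e2] at h4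
      rwa [show 2 * n - (2 * n - k + 1) + 1 = k by omega] at h4
  · rintro ⟨h0, h⟩
    refine ⟨h0, fun j hj1 hjn => ?_, ?_, fun j hj2 hjn => ?_⟩
    · have := h j (by omega)
      rwa [sg_low n c j hjn, dd_low n m j hjn.le] at this
    · have := h n (by omega)
      rwa [hN, dd_low _ m _ le_rfl] at this
    · obtain ⟨e1, e2⟩ := hj j hj2 hjn
      rw [← e1, ← e2]
      exact h _ (by omega)

theorem dd_add (n : ℕ) (m m' : ℕ → ℕ) (k : ℕ) : ∑ i ∈ range k, dd n (m + m') i =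
    ∑ i ∈ range k, dd n m i + ∑ i ∈ range k, dd n m' i := by
  rw [← sum_add_distrib]
  refine sum_congr rfl fun i _ => ?_
  unfold dd
  split_ifs <;> rfl

theorem tu_sg (n : ℕ) (i : ℕ) (hi : i < 2 * n - 1) :
    tu n (sg n i) = i ∧ 1 ≤ sg n i ∧ sg n i ≤ 2 * n - 1 := by
  unfold tu sg
  split_ifs <;> omega

theorem sg_tu (n : ℕ) (l : ℕ) (h1 : 1 ≤ l) (hl : l ≤ 2 * n - 1) : sg n (tu n l) = l := by
  unfold tu sg
  split_ifs <;> omega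

theorem lift_mem (n : ℕ) (hn : 2 ≤ n) (m x : ℕ → ℕ)
    (h : ∀ k ≤ 2 * n - 1, ∑ i ∈ range k, x i ≤ ∑ i ∈ range k, dd n m i) :
    (fun l => if l = 0 ∨ 2 * n - 1 < l then 0 else x (tu n l)) ∈ SC' n m := by
  rw [mem_SC'_iff n hn]
  refine ⟨fun l hl => if_pos hl, fun k hk => ?_⟩
  refine le_trans (le_of_eq (sum_congr rfl fun i hi => ?_)) (h k hk)
  rw [mem_range] at hi
  obtain ⟨a, b, c⟩ := tu_sg n i (by omega)
  rw [if_neg (by omega), a]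

/-- Minkowski sum property `S'_C(m + m') = S'_C(m) + S'_C(m')` for the polytope defined by
the Dyck-path and degree-path inequalities alone in type `C`. -/
theorem SC'_add_eq_minkowski (n : ℕ) (hn : 2 ≤ n) (m m' : ℕ → ℕ) :
    SC' n (m + m') = SC' n m + SC' n m' := by
  ext c
  rw [Set.mem_add]
  constructor
  · intro hc
    rw [mem_SC'_iff n hn] at hc
    obtain ⟨h0, h⟩ := hc
    obtain ⟨x, y, hxy, hx, hy⟩ := partial_split (2 * n - 1) (fun i => c (sg n i))
      (dd n m) (dd n m') (fun k hk => by rw [← dd_add]; exact h k hk)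
    refine ⟨_, lift_mem n hn m x hx, _, lift_mem n hn m' y hy, ?_⟩
    funext l
    simp only [Pi.add_apply]
    by_cases hl : l = 0 ∨ 2 * n - 1 < l
    · rw [if_pos hl, if_pos hl, h0 l hl]
    · rw [if_neg hl, if_neg hl, hxy, sg_tu n l (by omega) (by omega)]
  · rintro ⟨x, hx, y, hy, rfl⟩
    rw [mem_SC'_iff n hn] at hx hy ⊢
    refine ⟨fun l hl => ?_, fun k hk => ?_⟩
    · simp [hx.1 l hl, hy.1 l hl]
    · rw [dd_add]
      simp only [Pi.add_apply, sum_add_distrib]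
      exact add_le_add (hx.2 k hk) (hy.2 k hk)
end
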